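/- arXiv:2604.14681 — 2 statements merged into one kernel-verified Lean document; each statement's English description precedes it below -/
import Mathlib

section
/- (Theorem 3.1, expansion of the pair interaction.) Let d ≥ 1 and let (ρ^{(n)})_{n≥0} be symmetric measurable functions ρ^{(n)} : (ℝ^d)^n → [0,∞) with ρ^{(0)} = 1, translation invariant, satisfying a Ruelle bound ρ^{(n)} ≤ ξ^n for some ξ > 0, with constant density ρ := ρ^{(1)} > 0. Let ρ_T ∈ A₀ be the unique configuration functional with (ρ^{(n)})_{n≥0} = exp∗ ρ_T, and define Janossy densities j_Λ^{(n)}(x₁,…,x_n) := Σ_{k=0}^∞ ((−1)^k/k!) ∫_{Λ^k} ρ^{(n+k)}(x₁,…,x_n,y) dy. Let μ ∈ ℝ and let H : (ℝ^d)² → ℝ be symmetric measurable. Assume (Assumption A): for every bounded Δ ⊆ ℝ^d, sup_{x ∈ Δ} | j_{B_R}^{(1)}(x)/j_{B_R}^{(0)} − e^{μ} | → 0 and sup_{(x₁,x₂) ∈ Δ²} | j_{B_R}^{(2)}(x₁,x₂)/j_{B_R}^{(0)} − e^{2μ − H(x₁,x₂)} | → 0 as R → ∞. Assume (Assumption B):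 there are M, A, D_ρ > 0 such that for m ∈ {1,2}, every bounded measurable Λ, every k ≥ 1 and all x₁,…,x_m ∈ ℝ^d, ∫_{Λ^k} |ρ_T^{(m+k)}(x₁,…,x_m,y)| dy ≤ (m+k−1)! M A^m D_ρ^k ρ^m. Fix r > 0 and assume (Assumption C): there is d(r) > 0 with ρ² ≤ d(r) ρ^{(2)}(x₁,x₂) whenever |x₁ − x₂| ≥ r. For x₁, x₂ with ρ^{(2)}(x₁,x₂) ≠ 0 let ω_{(x₁,x₂)} ∈ A₀ be the unique functional satisfying D_{x₁,x₂} ρ_T / ρ^{(2)}(x₁,x₂) = ( exp∗ ω_{(x₁,x₂)} − (ρ²/ρ^{(2)}(x₁,x₂)) 𝟙 ) ∗ ( D_{x₁} ρ_T / ρ ) ∗ ( D_{x₂} ρ_T / ρ ). Then there exists D₀ > 0, depending only on M, A and d(r), such that if D_ρ ≤ D₀ then for all x₁, x₂ ∈ ℝ^d with |x₁ − x₂| ≥ r the series Σ_{k≥1} ((−1)^k/k!) ∫_{(ℝ^d)^k} ω_{(x₁,x₂)}^{(k)}(y₁,…,y_k) dy converges absolutely and H(x₁,x₂) = − log( ρ^{(2)}(x₁,x₂)/ρ²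 ) − Σ_{k=1}^∞ ((−1)^k/k!) ∫_{(ℝ^d)^k} ω_{(x₁,x₂)}^{(k)}(y₁,…,y_k) dy. -/
open MeasureTheory Finset

abbrev CF (E : Type) : Type := (n : ℕ) → (Fin n → E) → ℝ

namespace CF

variable {E : Type}

/-- Symmetry of a configuration functional under permutations of the arguments. -/
def IsSymm (F : CF E) : Prop :=
  ∀ (n : ℕ) (σ : Equiv.Perm (Fin n)) (x : Fin n → E), F n (x ∘ σ) = F n x

/-- The subtuple of `x` with indices in `I`, listed in increasing order. -/
noncomputable def sub {n : ℕ} (x : Fin n → E) (I : Finset (Fin n)) : Fin I.card → E :=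
  fun i => x (I.orderIsoOfFin rfl i).1

/-- The convolution `Ψ ∗ Φ`. -/
noncomputable def conv (Ψ Φ : CF E) : CF E :=
  fun n x => ∑ I : Finset (Fin n), Ψ I.card (sub x I) * Φ Iᶜ.card (sub x Iᶜ)

/-- The unit `𝟙`. -/
def unit : CF E := fun n _ => if n = 0 then 1 else 0

/-- Star-powers `Φ^{∗m}`. -/
noncomputable def starPow (Φ : CF E) : ℕ → CF E
  | 0 => unit
  | m + 1 => conv Φ (starPow Φ m)

/-- The star-exponential `exp∗ Φ = 𝟙 + Σ_{m≥1} Φ^{∗m}/m!`; on `A₀` the sum in the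
`n`-th component is finite since `(Φ^{∗m})^{(n)} = 0` for `m > n`. -/
noncomputable def starExp (Φ : CF E) : CF E :=
  fun n x => ∑ m ∈ Finset.range (n + 1), ((m.factorial : ℝ))⁻¹ * starPow Φ m n x

/-- The derivative `D_x`. -/
noncomputable def D (x : E) (Φ : CF E) : CF E := fun n y => Φ (n + 1) (Fin.cons x y)

/-- The second derivative `D_{x₁,x₂} = D_{x₁} ∘ D_{x₂}`. -/
noncomputable def D2 (x₁ x₂ : E) (Φ : CF E) : CF E := D x₁ (D x₂ Φ)

end CF

/-- Euclidean space `ℝ^d`. -/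
abbrev Euc (d : ℕ) : Type := EuclideanSpace ℝ (Fin d)

/-- The product measure on `Λ^n ⊆ (ℝ^d)^n` (Lebesgue measure restricted to `Λ`
in each coordinate). -/
noncomputable def piRestrict (d : ℕ) (Λ : Set (Euc d)) (n : ℕ) :
    MeasureTheory.Measure (Fin n → Euc d) :=
  MeasureTheory.Measure.pi fun _ => MeasureTheory.volume.restrict Λ

/-- Lebesgue measure on `(ℝ^d)^n`. -/
noncomputable def piVol (d : ℕ) (n : ℕ) : MeasureTheory.Measure (Fin n → Euc d) :=
  MeasureTheory.Measure.pi fun _ => MeasureTheory.volume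
/-- The Janossy densities
`j_Λ^{(n)}(x) = Σ_k ((−1)^k/k!) ∫_{Λ^k} ρ^{(n+k)}(x,y) dy`. -/
noncomputable def janossy (d : ℕ) (ρ : CF (Euc d)) (Λ : Set (Euc d)) (n : ℕ)
    (x : Fin n → Euc d) : ℝ :=
  ∑' k : ℕ, (-1 : ℝ) ^ k / k.factorial *
    ∫ y, ρ (n + k) (Fin.append x y) ∂(piRestrict d Λ k)

namespace CF

section Alg
variable {E : Type}

/-- value of `F` on the subtuple indexed by `I`. -/
noncomputable def ev (F : CF E) {n : ℕ} (x : Fin n → E) (I : Finset (Fin n)) : ℝ :=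
  F I.card (sub x I)

lemma ev_eq (F : CF E) {n k : ℕ} (x : Fin n → E) (I : Finset (Fin n)) (h : I.card = k) :
    ev F x I = F k (fun i => x (I.orderEmbOfFin h i)) := by
  subst h; rfl

lemma ev_comp (F : CF E) {m n : ℕ} (x : Fin n → E) (e : Fin m ↪o Fin n) (I : Finset (Fin m)) :
    ev F (fun i => x (e i)) I = ev F x (I.map e.toEmbedding) := by
  rw [ev_eq F x (I.map e.toEmbedding) (card_map _), ev_eq F _ I rfl]
  congr 1
  funext i
  congr 1
  have := Finset.orderEmbOfFin_unique (s := I.map e.toEmbedding) (k := I.card) (card_map _)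
    (f := fun i => e (I.orderEmbOfFin rfl i)) (by intro i; simp)
    (by intro i j hij; simpa using hij)
  exact congrFun this i

lemma sum_map_emb {m n : ℕ} (e : Fin m ↪ Fin n) (f : Finset (Fin n) → ℝ) :
    ∑ I : Finset (Fin m), f (I.map e) = ∑ t ∈ (univ.map e).powerset, f t := by
  refine Finset.sum_nbij (fun I => I.map e) ?_ ?_ ?_ ?_
  · intro I _; simp only [Finset.mem_powerset]; exact Finset.map_subset_map.2 (subset_univ _)
  · intro I _ J _ h; exact Finset.map_injective e h
  · intro t ht
    simp only [Finset.coe_powerset, Set.mem_preimage, Set.mem_powerset_iff, Finset.coe_subset] at ht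
    refine ⟨univ.filter (fun i => e i ∈ t), by simp, ?_⟩
    ext a
    simp only [Finset.mem_map, Finset.mem_filter, Finset.mem_univ, true_and]
    constructor
    · rintro ⟨i, hi, rfl⟩; exact hi
    · intro ha
      have := ht ha
      simp only [Finset.mem_map, Finset.mem_univ, true_and] at this
      obtain ⟨i, rfl⟩ := this
      exact ⟨i, ha, rfl⟩
  · intro I _; rfl

lemma conv_apply (Ψ Φ : CF E) (n : ℕ) (x : Fin n → E) :
    conv Ψ Φ n x = ∑ I : Finset (Fin n), ev Ψ x I * ev Φ x Iᶜ := rfl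

lemma map_compl_eq {m n : ℕ} (e : Fin m ↪ Fin n) (I : Finset (Fin m)) :
    (Iᶜ).map e = (univ.map e) \ (I.map e) := by
  ext a
  simp only [Finset.mem_map, Finset.mem_compl, Finset.mem_sdiff, Finset.mem_univ, true_and]
  constructor
  · rintro ⟨i, hi, rfl⟩
    refine ⟨⟨i, rfl⟩, ?_⟩
    rintro ⟨j, hj, hji⟩
    exact hi (e.injective hji ▸ hj)
  · rintro ⟨⟨i, rfl⟩, h⟩
    exact ⟨i, fun hi => h ⟨i, hi, rfl⟩, rfl⟩

lemma ev_conv (Ψ Φ : CF E) {n : ℕ} (x : Fin n → E) (J : Finset (Fin n)) :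
    ev (conv Ψ Φ) x J = ∑ I ∈ J.powerset, ev Ψ x I * ev Φ x (J \ I) := by
  have hJ : univ.map (J.orderEmbOfFin rfl).toEmbedding = J := Finset.map_orderEmbOfFin_univ J rfl
  rw [ev_eq _ x J rfl, conv_apply]
  simp_rw [ev_comp, map_compl_eq, hJ]
  rw [sum_map_emb (J.orderEmbOfFin rfl).toEmbedding (fun I => ev Ψ x I * ev Φ x (J \ I)), hJ]

lemma conv_comm (Ψ Φ : CF E) : conv Ψ Φ = conv Φ Ψ := by
  funext n x
  rw [conv_apply, conv_apply]
  refine Finset.sum_nbij' (fun I => Iᶜ) (fun I => Iᶜ) ?_ ?_ ?_ ?_ ?_ <;> simp [mul_comm]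

lemma conv_left_comm (Ψ Φ X : CF E) : conv Ψ (conv Φ X) = conv Φ (conv Ψ X) := by
  funext n x
  rw [conv_apply, conv_apply]
  simp_rw [ev_conv, Finset.mul_sum]
  rw [Finset.sum_comm' (t' := univ) (s' := fun J => (Jᶜ).powerset)]
  · refine Finset.sum_congr rfl fun J _ => Finset.sum_congr rfl fun I _ => ?_
    rw [show Iᶜ \ J = Jᶜ \ I by ext a; simp [and_comm]]
    ring
  · intro I J
    simp only [Finset.mem_univ, Finset.mem_powerset, true_and, and_true]
    exact Finset.subset_compl_comm

lemma conv_assoc (Ψ Φ X : CF E) : conv (conv Ψ Φ) X = conv Ψ (conv Φ X) := by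
  rw [conv_comm, conv_left_comm, conv_comm X Φ]

lemma conv_add (F G H : CF E) : conv F (G + H) = conv F G + conv F H := by
  funext n x
  simp only [conv, Pi.add_apply, mul_add, Finset.sum_add_distrib]

lemma conv_sub (F G H : CF E) : conv F (G - H) = conv F G - conv F H := by
  funext n x
  simp only [conv, Pi.sub_apply, mul_sub, Finset.sum_sub_distrib]

lemma conv_smul (c : ℝ) (F G : CF E) : conv F (c • G) = c • conv F G := by
  funext n x
  simp only [conv, Pi.smul_apply, smul_eq_mul, Finset.mul_sum]
  exact Finset.sum_congr rfl fun _ _ => by ring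

lemma add_conv (F G H : CF E) : conv (F + G) H = conv F H + conv G H := by
  rw [conv_comm, conv_add, conv_comm H, conv_comm H]

lemma smul_conv (c : ℝ) (F G : CF E) : conv (c • F) G = c • conv F G := by
  rw [conv_comm, conv_smul, conv_comm]

lemma conv_zero_apply (F G : CF E) (x : Fin 0 → E) : conv F G 0 x = F 0 x * G 0 x := by
  rw [conv_apply, Finset.univ_unique, Finset.sum_singleton, ev_eq (k := 0), ev_eq (k := 0)]
  · congr 2 <;> exact Subsingleton.elim _ _
  · exact Nat.le_zero.1 (Finset.card_le_univ _)
  · exact Nat.le_zero.1 (Finset.card_le_univ _)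

lemma ev_unit {n : ℕ} (x : Fin n → E) (I : Finset (Fin n)) :
    ev unit x I = if I = ∅ then 1 else 0 := by
  simp [ev, unit]

lemma unit_conv (F : CF E) : conv unit F = F := by
  funext n x
  rw [conv_apply]
  simp_rw [ev_unit]
  simp only [ite_mul, one_mul, zero_mul, Finset.sum_ite_eq', Finset.mem_univ, if_true,
    Finset.compl_empty]
  rw [ev_eq (k := n) (h := by simp)]
  congr 1
  funext i
  congr 1
  exact (congrFun (Finset.orderEmbOfFin_unique (s := (univ : Finset (Fin n))) (k := n) (by simp)
    (f := id) (by simp) strictMono_id) i).symm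

lemma conv_unit (F : CF E) : conv F unit = F := by rw [conv_comm, unit_conv]

lemma ev_cons_map (F : CF E) {n : ℕ} (x : E) (y : Fin n → E) (I : Finset (Fin n)) :
    ev F (Fin.cons x y : Fin (n+1) → E) (I.map (Fin.succEmb n)) = ev F y I := by
  have := ev_comp F (Fin.cons x y : Fin (n+1) → E) (Fin.succOrderEmb n) I
  simpa using this.symm

lemma ev_cons_insert (F : CF E) {n : ℕ} (x : E) (y : Fin n → E) (I : Finset (Fin n)) :
    ev F (Fin.cons x y : Fin (n+1) → E) (insert 0 (I.map (Fin.succEmb n))) = ev (D x F) y I := by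
  have hc : (insert (0 : Fin (n+1)) (I.map (Fin.succEmb n))).card = I.card + 1 := by
    rw [Finset.card_insert_of_notMem, Finset.card_map]
    simp [Fin.succ_ne_zero]
  rw [ev_eq _ _ _ hc, ev_eq (D x F) y I rfl, D]
  congr 1
  have := Finset.orderEmbOfFin_unique hc
    (f := Fin.cons 0 (fun i => Fin.succ (I.orderEmbOfFin rfl i)))
    (by
      intro i
      refine Fin.cases ?_ (fun i => ?_) i
      · simp
      · simp)
    (by
      rw [Fin.strictMono_iff_lt_succ]
      intro i
      rcases i with ⟨i, hi⟩
      cases i with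
      | zero =>
        change (Fin.cons 0 (fun i => Fin.succ (I.orderEmbOfFin rfl i)) : Fin (I.card+1) → Fin (n+1)) 0 < _
        rw [Fin.cons_zero, Fin.cons_succ]
        exact Fin.succ_pos _
      | succ i =>
        change (Fin.cons 0 (fun i => Fin.succ (I.orderEmbOfFin rfl i)) : Fin (I.card+1) → Fin (n+1)) (Fin.succ ⟨i, by omega⟩) < _
        rw [Fin.cons_succ, Fin.cons_succ]
        simp only [Fin.succ_lt_succ_iff, OrderEmbedding.lt_iff_lt]
        simp)
  rw [← this]
  funext i
  refine Fin.cases ?_ (fun i => ?_) i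
  · simp
  · simp

lemma D_conv (x : E) (Ψ Φ : CF E) : D x (conv Ψ Φ) = conv (D x Ψ) Φ + conv Ψ (D x Φ) := by
  funext n y
  simp only [Pi.add_apply]
  have h0 : (0 : Fin (n+1)) ∉ univ.map (Fin.succEmb n) := by simp [Fin.succ_ne_zero]
  have hu : (univ : Finset (Fin (n+1))) = insert 0 (univ.map (Fin.succEmb n)) := by
    ext a; refine Fin.cases ?_ (fun a => ?_) a <;> simp
  change conv Ψ Φ (n+1) (Fin.cons x y) = _
  rw [conv_apply, ← Finset.powerset_univ]
  conv_lhs => rw [hu]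
  rw [Finset.sum_powerset_insert h0, ← sum_map_emb, ← sum_map_emb, conv_apply, conv_apply, add_comm]
  congr 1
  · refine Finset.sum_congr rfl fun I _ => ?_
    rw [ev_cons_insert]
    congr 1
    rw [← ev_cons_map Φ x y]
    congr 1
    ext a; refine Fin.cases ?_ (fun a => ?_) a <;> simp [Fin.succ_ne_zero]
  · refine Finset.sum_congr rfl fun I _ => ?_
    rw [ev_cons_map]
    congr 1
    rw [← ev_cons_insert Φ x y]
    congr 1
    ext a; refine Fin.cases ?_ (fun a => ?_) a <;> simp [Fin.succ_ne_zero]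

lemma D_unit (x : E) : D x (unit : CF E) = 0 := by
  funext n y; simp [D, unit]

lemma D_starPow (x : E) (Φ : CF E) (m : ℕ) :
    D x (starPow Φ (m+1)) = ((m+1 : ℕ) : ℝ) • conv (D x Φ) (starPow Φ m) := by
  induction m with
  | zero => simp [starPow, conv_unit]
  | succ m ih =>
    rw [starPow, D_conv, ih, conv_smul, conv_left_comm]
    rw [show conv Φ (starPow Φ m) = starPow Φ (m+1) from rfl]
    push_cast
    module

lemma starPow_eq_zero {Φ : CF E} (h0 : Φ 0 = 0) :
    ∀ (m k : ℕ), k < m → starPow Φ m k = 0 := by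
  intro m
  induction m with
  | zero => intro k hk; omega
  | succ m ih =>
    intro k hk
    funext x
    rw [starPow]
    refine Finset.sum_eq_zero fun I _ => ?_
    by_cases hI : I.card = 0
    · have : Φ I.card (sub x I) = 0 := by
        generalize sub x I = z
        generalize I.card = q at hI z
        subst hI; simp [h0]
      rw [this, zero_mul]
    · rw [ih, Pi.zero_apply, mul_zero]
      rw [Finset.card_compl, Fintype.card_fin]
      have := Finset.card_le_univ I
      simp at this
      omega

lemma starExp_eq {Φ : CF E} (h0 : Φ 0 = 0) {n N : ℕ} (h : n < N) (x : Fin n → E) :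
    starExp Φ n x = ∑ m ∈ Finset.range N, ((m.factorial : ℝ))⁻¹ * starPow Φ m n x := by
  rw [starExp]
  refine Finset.sum_subset (by intro a; simp; omega) fun m _ hm => ?_
  rw [starPow_eq_zero h0 m n (by simp at hm; omega)]; simp

lemma D_starExp (x : E) {Φ : CF E} (h0 : Φ 0 = 0) :
    D x (starExp Φ) = conv (D x Φ) (starExp Φ) := by
  funext n y
  rw [D, starExp, Finset.sum_range_succ']
  have h1 : ∀ m, starPow Φ (m+1) (n+1) (Fin.cons x y)
      = ((m+1 : ℕ) : ℝ) * conv (D x Φ) (starPow Φ m) n y := by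
    intro m
    have := congrFun (congrFun (D_starPow x Φ m) n) y
    simpa [D] using this
  simp_rw [h1]
  have h2 : ∀ I : Finset (Fin n), starExp Φ Iᶜ.card (sub y Iᶜ) =
      ∑ m ∈ Finset.range (n+1), ((m.factorial : ℝ))⁻¹ * starPow Φ m Iᶜ.card (sub y Iᶜ) := by
    intro I
    apply starExp_eq h0
    have := Finset.card_le_univ Iᶜ
    simp only [Fintype.card_fin] at this
    omega
  rw [conv]
  simp_rw [h2, Finset.mul_sum]
  rw [Finset.sum_comm]
  simp only [starPow, unit, Nat.add_eq_zero_iff, one_ne_zero, and_false, if_false, mul_zero, add_zero]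
  refine Finset.sum_congr rfl fun m _ => ?_
  rw [conv, Finset.mul_sum, Finset.mul_sum]
  refine Finset.sum_congr rfl fun I _ => ?_
  rw [Nat.factorial_succ]
  have : (m.factorial : ℝ) ≠ 0 := by positivity
  push_cast
  field_simp

end Alg

set_option linter.unusedSectionVars false

section Meas
variable {E : Type} [MeasurableSpace E] (ν : Measure E) [SigmaFinite ν]

lemma mp_sub {n : ℕ} (I : Finset (Fin n)) :
    MeasurePreserving (fun x : Fin n → E => (sub x I, sub x Iᶜ))
      (Measure.pi fun _ => ν)
      ((Measure.pi fun _ : Fin I.card => ν).prod (Measure.pi fun _ : Fin Iᶜ.card => ν)) := by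
  have h1 := (measurePreserving_piCongrLeft (fun _ : Fin n => ν)
    (finSumEquivOfFinset (s := I) rfl rfl)).symm
  have h2 := measurePreserving_sumPiEquivProdPi
    (fun _ : Fin I.card ⊕ Fin Iᶜ.card => ν)
  exact h2.comp h1

lemma meas_sub {n : ℕ} (I : Finset (Fin n)) : Measurable (fun x : Fin n → E => sub x I) :=
  measurable_pi_lambda _ fun _ => measurable_pi_apply _

lemma term_int (F G : CF E) {n : ℕ} (I : Finset (Fin n))
    (h : (Integrable (F I.card) (Measure.pi fun _ => ν) ∧
      Integrable (G Iᶜ.card) (Measure.pi fun _ => ν)) ∨ F I.card = 0 ∨ G Iᶜ.card = 0) :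
    Integrable (fun x : Fin n → E => F I.card (sub x I) * G Iᶜ.card (sub x Iᶜ))
      (Measure.pi fun _ => ν) ∧
    ∫ x : Fin n → E, F I.card (sub x I) * G Iᶜ.card (sub x Iᶜ) ∂(Measure.pi fun _ => ν) =
      (∫ x, F I.card x ∂(Measure.pi fun _ => ν)) * ∫ x, G Iᶜ.card x ∂(Measure.pi fun _ => ν) := by
  rcases h with ⟨h1, h2⟩ | h | h
  · have hi := h1.mul_prod h2
    refine ⟨(mp_sub ν I).integrable_comp_of_integrable hi, ?_⟩
    rw [← integral_prod_mul]
    have := integral_map (f := fun z : (Fin I.card → E) × (Fin Iᶜ.card → E) => F _ z.1 * G _ z.2)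
      (mp_sub ν I).measurable.aemeasurable (by rw [(mp_sub ν I).map_eq]; exact hi.aestronglyMeasurable)
    rw [(mp_sub ν I).map_eq] at this
    rw [this]
  · simp [h]
  · simp [h]

/-- normalised integrals -/
noncomputable def nint (F : CF E) (k : ℕ) : ℝ :=
  (∫ x, F k x ∂(Measure.pi fun _ => ν)) / k.factorial

/-- absolute value -/
noncomputable def cabs (F : CF E) : CF E := fun n x => |F n x|

lemma nint_cabs_nonneg (F : CF E) (k : ℕ) : 0 ≤ nint ν (cabs F) k :=
  div_nonneg (integral_nonneg fun _ => abs_nonneg _) (by positivity)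

lemma abs_nint_le (F : CF E) (k : ℕ) : |nint ν F k| ≤ nint ν (cabs F) k := by
  rw [nint, nint, abs_div, Nat.abs_cast]
  gcongr
  exact abs_integral_le_integral_abs

lemma conv_int (F G : CF E) (n : ℕ)
    (h : ∀ i j, i + j = n → (Integrable (F i) (Measure.pi fun _ => ν) ∧
      Integrable (G j) (Measure.pi fun _ => ν)) ∨ F i = 0 ∨ G j = 0) :
    Integrable (conv F G n) (Measure.pi fun _ => ν) ∧
    nint ν (conv F G) n = ∑ p ∈ antidiagonal n, nint ν F p.1 * nint ν G p.2 := by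
  have hc : ∀ I : Finset (Fin n), I.card + Iᶜ.card = n := fun I => by simp [Finset.card_add_card_compl]
  have ht := fun I : Finset (Fin n) => term_int ν F G I (h _ _ (hc I))
  refine ⟨integrable_finsetSum _ fun I _ => (ht I).1, ?_⟩
  rw [nint]
  simp only [conv]
  rw [integral_finsetSum _ fun I _ => (ht I).1]
  rw [Finset.sum_congr rfl fun I _ => (ht I).2]
  have hcc : ∀ I : Finset (Fin n), Iᶜ.card = n - I.card := fun I => by
    rw [Finset.card_compl, Fintype.card_fin]
  set a : ℕ → ℝ := fun j => ∫ x, F j x ∂(Measure.pi fun _ => ν) with ha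
  set b : ℕ → ℝ := fun j => ∫ x, G j x ∂(Measure.pi fun _ => ν) with hb
  have hab : ∀ I : Finset (Fin n), (∫ x, F I.card x ∂(Measure.pi fun _ => ν)) *
      (∫ x, G Iᶜ.card x ∂(Measure.pi fun _ => ν)) = a I.card * b (n - I.card) := fun I => by
    rw [← hcc]
  rw [Finset.sum_congr rfl fun I _ => hab I]
  rw [← Finset.powerset_univ, Finset.sum_powerset_apply_card (fun c => a c * b (n - c)),
    Finset.Nat.sum_antidiagonal_eq_sum_range_succ_mk, Finset.card_univ, Fintype.card_fin,
    Finset.sum_div]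
  refine Finset.sum_congr rfl fun k hk => ?_
  have hk' : k ≤ n := by simp at hk; omega
  simp only [nsmul_eq_mul, Nat.cast_choose ℝ hk', nint, ha, hb]
  have : (n.factorial : ℝ) ≠ 0 := by positivity
  field_simp

lemma cabs_integrable {F : CF E} {k : ℕ} (h : Integrable (F k) (Measure.pi fun _ => ν)) :
    Integrable (cabs F k) (Measure.pi fun _ => ν) := h.abs

lemma cabs_conv_le (F G : CF E) (n : ℕ) (x : Fin n → E) :
    cabs (conv F G) n x ≤ conv (cabs F) (cabs G) n x := by
  simp only [cabs, conv]
  refine (Finset.abs_sum_le_sum_abs _ _).trans (le_of_eq ?_)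
  simp [abs_mul]

lemma conv_abs_int (F G : CF E) (n : ℕ)
    (h : ∀ i j, i + j = n → (Integrable (F i) (Measure.pi fun _ => ν) ∧
      Integrable (G j) (Measure.pi fun _ => ν)) ∨ F i = 0 ∨ G j = 0) :
    nint ν (cabs (conv F G)) n ≤
      ∑ p ∈ antidiagonal n, nint ν (cabs F) p.1 * nint ν (cabs G) p.2 := by
  have h1 := conv_int ν F G n h
  have h2 := conv_int ν (cabs F) (cabs G) n (fun i j hij => by
    rcases h i j hij with ⟨a, b⟩ | a | a
    · exact Or.inl ⟨a.abs, b.abs⟩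
    · right; left; funext x; simp [cabs, a]
    · right; right; funext x; simp [cabs, a])
  rw [← h2.2, nint, nint]
  gcongr ?_ / _
  exact integral_mono h1.1.abs h2.1 (cabs_conv_le F G n)

/-- partial sums of norms -/
noncomputable def psum (F : CF E) (N : ℕ) : ℝ := ∑ k ∈ range (N+1), nint ν (cabs F) k

lemma nint_cabs_zero {F : CF E} {k : ℕ} (h : F k = 0) : nint ν (cabs F) k = 0 := by
  simp [nint, cabs, h]

lemma psum_nonneg (F : CF E) (N : ℕ) : 0 ≤ psum ν F N :=
  Finset.sum_nonneg fun _ _ => nint_cabs_nonneg ν F _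

lemma psum_mono (F : CF E) {N N' : ℕ} (h : N ≤ N') : psum ν F N ≤ psum ν F N' :=
  Finset.sum_le_sum_of_subset_of_nonneg (by intro a; simp; omega)
    fun _ _ _ => nint_cabs_nonneg ν F _

lemma conv_upto (F G : CF E) (N : ℕ) (hF0 : F 0 = 0) (hG0 : G 0 = 0)
    (hF : ∀ k ≤ N, Integrable (F k) (Measure.pi fun _ => ν))
    (hG : ∀ k ≤ N, Integrable (G k) (Measure.pi fun _ => ν)) :
    (∀ k ≤ N + 1, Integrable (conv F G k) (Measure.pi fun _ => ν)) ∧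
    psum ν (conv F G) (N+1) ≤ psum ν F N * psum ν G N := by
  have h : ∀ n ≤ N + 1, ∀ i j, i + j = n → (Integrable (F i) (Measure.pi fun _ => ν) ∧
      Integrable (G j) (Measure.pi fun _ => ν)) ∨ F i = 0 ∨ G j = 0 := by
    intro n hn i j hij
    rcases Nat.eq_zero_or_pos i with rfl | hi
    · exact Or.inr (Or.inl hF0)
    rcases Nat.eq_zero_or_pos j with rfl | hj
    · exact Or.inr (Or.inr hG0)
    exact Or.inl ⟨hF i (by omega), hG j (by omega)⟩
  refine ⟨fun k hk => (conv_int ν F G k (h k hk)).1, ?_⟩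
  have h1 : psum ν (conv F G) (N+1) ≤ ∑ n ∈ range (N+2),
      ∑ p ∈ antidiagonal n, nint ν (cabs F) p.1 * nint ν (cabs G) p.2 :=
    Finset.sum_le_sum fun n hn => conv_abs_int ν F G n (h n (by simp at hn; omega))
  refine h1.trans ?_
  rw [← Finset.sum_biUnion, psum, psum, Finset.sum_mul_sum, ← Finset.sum_product']
  · rw [← Finset.sum_filter_ne_zero]
    refine Finset.sum_le_sum_of_subset_of_nonneg ?_ fun p _ _ =>
      mul_nonneg (nint_cabs_nonneg ν F _) (nint_cabs_nonneg ν G _)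
    rintro ⟨i, j⟩ hp
    simp only [Finset.mem_filter, Finset.mem_biUnion, Finset.mem_range, Finset.HasAntidiagonal.mem_antidiagonal] at hp
    obtain ⟨⟨n, hn, hij⟩, hne⟩ := hp
    have hi : i ≠ 0 := by
      rintro rfl; exact hne (by rw [nint_cabs_zero ν hF0, zero_mul])
    have hj : j ≠ 0 := by
      rintro rfl; exact hne (by rw [nint_cabs_zero ν hG0, mul_zero])
    simp only [Finset.mem_product, Finset.mem_range]
    omega
  · intro a _ b _ hab
    simp only [Function.onFun]
    rw [Finset.disjoint_left]
    intro p hp hp'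
    simp at hp hp'
    exact hab (hp.symm.trans hp')

/-- integrable with summable norms -/
def Nice (F : CF E) : Prop :=
  (∀ k, Integrable (F k) (Measure.pi fun _ => ν)) ∧ Summable (nint ν (cabs F))

/-- norm -/
noncomputable def cnorm (F : CF E) : ℝ := ∑' k, nint ν (cabs F) k

/-- the functional -/
noncomputable def L (F : CF E) : ℝ := ∑' k, (-1 : ℝ) ^ k * nint ν F k

lemma cnorm_nonneg (F : CF E) : 0 ≤ cnorm ν F := tsum_nonneg (nint_cabs_nonneg ν F)

variable {ν}

lemma Nice.summable_norm {F : CF E} (h : Nice ν F) :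
    Summable fun k => ‖(-1 : ℝ) ^ k * nint ν F k‖ :=
  h.2.of_nonneg_of_le (fun _ => norm_nonneg _) fun k => by
    simpa using abs_nint_le ν F k

lemma Nice.psum_le {F : CF E} (h : Nice ν F) (N : ℕ) : psum ν F N ≤ cnorm ν F :=
  h.2.sum_le_tsum _ fun k _ => nint_cabs_nonneg ν F k

lemma nice_of_psum {F : CF E} {c : ℝ} (h : ∀ k, Integrable (F k) (Measure.pi fun _ => ν))
    (hc : ∀ N, psum ν F N ≤ c) : Nice ν F ∧ cnorm ν F ≤ c := by
  have hb : ∀ n, ∑ i ∈ Finset.range n, nint ν (cabs F) i ≤ c := fun n =>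
    le_trans (Finset.sum_le_sum_of_subset_of_nonneg (by intro a; simp; omega)
      fun _ _ _ => nint_cabs_nonneg ν F _) (hc n)
  exact ⟨⟨h, summable_of_sum_range_le (nint_cabs_nonneg ν F) hb⟩,
    Real.tsum_le_of_sum_range_le (nint_cabs_nonneg ν F) hb⟩

lemma Nice.conv {F G : CF E} (hF : Nice ν F) (hG : Nice ν G) :
    Nice ν (conv F G) ∧ cnorm ν (CF.conv F G) ≤ cnorm ν F * cnorm ν G ∧
      L ν (CF.conv F G) = L ν F * L ν G := by
  have h : ∀ n, ∀ i j, i + j = n → (Integrable (F i) (Measure.pi fun _ => ν) ∧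
      Integrable (G j) (Measure.pi fun _ => ν)) ∨ F i = 0 ∨ G j = 0 :=
    fun n i j _ => Or.inl ⟨hF.1 i, hG.1 j⟩
  have hFn : Summable fun k => ‖nint ν (cabs F) k‖ := hF.2.norm
  have hGn : Summable fun k => ‖nint ν (cabs G) k‖ := hG.2.norm
  have hs := (summable_norm_sum_mul_antidiagonal_of_summable_norm hFn hGn).of_norm
  have hle := fun n => conv_abs_int ν F G n (h n)
  have hsum := hs.of_nonneg_of_le (nint_cabs_nonneg ν (CF.conv F G)) hle
  refine ⟨⟨fun k => (conv_int ν F G k (h k)).1, hsum⟩, ?_, ?_⟩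
  · rw [cnorm, cnorm, cnorm, tsum_mul_tsum_eq_tsum_sum_antidiagonal_of_summable_norm hFn hGn]
    exact hsum.tsum_le_tsum hle hs
  · rw [L, L, L, tsum_mul_tsum_eq_tsum_sum_antidiagonal_of_summable_norm hF.summable_norm
      hG.summable_norm]
    congr 1
    funext n
    rw [(conv_int ν F G n (h n)).2, Finset.mul_sum]
    refine Finset.sum_congr rfl fun p hp => ?_
    rw [← Finset.HasAntidiagonal.mem_antidiagonal.1 hp, pow_add]
    ring

lemma Nice.add {F G : CF E} (hF : Nice ν F) (hG : Nice ν G) :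
    Nice ν (F + G) ∧ cnorm ν (F + G) ≤ cnorm ν F + cnorm ν G ∧
      L ν (F + G) = L ν F + L ν G := by
  have hle : ∀ n, nint ν (cabs (F + G)) n ≤ nint ν (cabs F) n + nint ν (cabs G) n := by
    intro n
    rw [nint, nint, nint, ← add_div, ← integral_add (cabs_integrable ν (hF.1 n)) (cabs_integrable ν (hG.1 n))]
    gcongr ?_ / _
    exact integral_mono ((hF.1 n).add (hG.1 n)).abs ((hF.1 n).abs.add (hG.1 n).abs)
      fun x => abs_add_le _ _
  have hs := hF.2.add hG.2
  have hsum := hs.of_nonneg_of_le (nint_cabs_nonneg ν (F + G)) hle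
  refine ⟨⟨fun k => (hF.1 k).add (hG.1 k), hsum⟩, ?_, ?_⟩
  · rw [cnorm, cnorm, cnorm, ← hF.2.tsum_add hG.2]
    exact hsum.tsum_le_tsum hle hs
  · rw [L, L, L, ← hF.summable_norm.of_norm.tsum_add hG.summable_norm.of_norm]
    congr 1
    funext n
    rw [nint, nint, nint, ← mul_add, ← add_div, ← integral_add (hF.1 n) (hG.1 n)]
    rfl

lemma Nice.smul (c : ℝ) {F : CF E} (hF : Nice ν F) :
    Nice ν (c • F) ∧ cnorm ν (c • F) = |c| * cnorm ν F ∧ L ν (c • F) = c * L ν F := by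
  have hle : ∀ n, nint ν (cabs (c • F)) n = |c| * nint ν (cabs F) n := by
    intro n
    rw [nint, nint, ← mul_div_assoc, ← integral_const_mul]
    simp [cabs, abs_mul]
  refine ⟨⟨fun k => (hF.1 k).smul c, ?_⟩, ?_, ?_⟩
  · simpa only [funext hle] using hF.2.mul_left |c|
  · rw [cnorm, cnorm, ← tsum_mul_left, funext hle]
  · rw [L, L, ← tsum_mul_left]
    congr 1
    funext n
    rw [nint, nint, mul_left_comm, ← mul_div_assoc c, ← integral_const_mul]
    rfl

lemma nint_unit (k : ℕ) : nint ν (unit : CF E) k = if k = 0 then 1 else 0 := by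
  rcases k with _ | k
  · rw [nint, Measure.pi_of_empty]; simp [unit]
  · simp [nint, unit]

lemma cabs_unit : cabs (unit : CF E) = unit := by
  funext n x; simp only [cabs, unit]; split_ifs <;> simp

lemma nice_unit : Nice ν (unit : CF E) ∧ cnorm ν (unit : CF E) = 1 ∧ L ν (unit : CF E) = 1 := by
  refine ⟨⟨fun k => ?_, ?_⟩, ?_, ?_⟩
  · rcases k with _ | k
    · have : (unit : CF E) 0 = fun _ => 1 := by funext x; simp [unit]
      rw [this, Measure.pi_of_empty]; exact integrable_const _
    · have : (unit : CF E) (k+1) = fun _ => 0 := by funext x; simp [unit]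
      rw [this]; exact integrable_zero _ _ _
  · rw [cabs_unit, funext nint_unit]
    exact summable_of_ne_finset_zero (s := {0}) (by intro b hb; simp at hb; simp [hb])
  · rw [cnorm, cabs_unit, funext nint_unit, tsum_ite_eq]
  · rw [L, funext nint_unit, tsum_eq_single 0] <;> simp +contextual

lemma nice_starPow {F : CF E} (hF : Nice ν F) (m : ℕ) :
    Nice ν (starPow F m) ∧ cnorm ν (starPow F m) ≤ cnorm ν F ^ m ∧
      L ν (starPow F m) = L ν F ^ m := by
  induction m with
  | zero => simpa [starPow] using ⟨nice_unit.1, nice_unit.2.1.le, nice_unit.2.2⟩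
  | succ m ih =>
    obtain ⟨a, b, c⟩ := hF.conv ih.1
    refine ⟨a, b.trans ?_, ?_⟩
    · rw [pow_succ']
      exact mul_le_mul_of_nonneg_left ih.2.1 (cnorm_nonneg ν F)
    · rw [starPow, c, ih.2.2, pow_succ']

lemma L_starExp {F : CF E} (hF : Nice ν F) (h0 : F 0 = 0) :
    L ν (starExp F) = Real.exp (L ν F) := by
  set f : ℕ → ℕ → ℝ := fun m k => (m.factorial : ℝ)⁻¹ * ((-1) ^ k * nint ν (starPow F m) k) with hf
  have hsum : Summable (fun p : ℕ × ℕ => f p.1 p.2) := by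
    apply Summable.of_norm
    rw [summable_prod_of_nonneg (fun _ => norm_nonneg _)]
    have hm : ∀ m k, ‖f m k‖ ≤ (m.factorial : ℝ)⁻¹ * nint ν (cabs (starPow F m)) k := by
      intro m k
      rw [hf, norm_mul]
      simp only [norm_mul, norm_pow, norm_neg, norm_one, one_pow, one_mul, norm_inv, Real.norm_natCast]
      gcongr
      exact abs_nint_le _ _ _
    have hs : ∀ m, Summable fun k => ‖f m k‖ := fun m =>
      ((nice_starPow hF m).1.2.mul_left _).of_nonneg_of_le (fun _ => norm_nonneg _) (hm m)
    refine ⟨hs, ?_⟩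
    refine (Real.summable_pow_div_factorial (cnorm ν F)).of_nonneg_of_le
      (fun _ => tsum_nonneg fun _ => norm_nonneg _) fun m => ?_
    refine ((hs m).tsum_le_tsum (hm m) ((nice_starPow hF m).1.2.mul_left _)).trans ?_
    rw [tsum_mul_left, div_eq_inv_mul]
    gcongr
    exact (nice_starPow hF m).2.1
  have hL : ∀ k, (-1 : ℝ) ^ k * nint ν (starExp F) k = ∑' m, f m k := by
    intro k
    rw [tsum_eq_sum (s := range (k+1))]
    · rw [nint]
      simp only [starExp]
      rw [integral_finsetSum _ fun m _ => ((nice_starPow hF m).1.1 k).const_mul _]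
      simp_rw [integral_const_mul]
      rw [Finset.sum_div, Finset.mul_sum]
      refine Finset.sum_congr rfl fun m _ => ?_
      simp only [hf, nint]
      ring
    · intro m hm
      simp only [hf, nint]
      rw [starPow_eq_zero h0 m k (by simp at hm; omega)]
      simp
  rw [L, funext hL, Summable.tsum_comm (f := fun m k => f m k) hsum, Real.exp_eq_exp_ℝ,
    NormedSpace.exp_eq_tsum_div]
  congr 1
  funext m
  simp only [hf]
  rw [tsum_mul_left, show (∑' k, (-1 : ℝ) ^ k * nint ν (starPow F m) k) = L ν (starPow F m) from rfl,
    (nice_starPow hF m).2.2, div_eq_inv_mul]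

lemma nice_linear {w h u : CF E} (hw0 : w 0 = 0) (hu0 : u 0 = 0) (hh : Nice ν h) (hu : Nice ν u)
    (hhn : cnorm ν h ≤ 1/8) (hun : cnorm ν u ≤ 1/2) (heq : w = h - conv w u) :
    Nice ν w ∧ cnorm ν w ≤ 1/4 := by
  have key : ∀ N, (∀ k ≤ N, Integrable (w k) (Measure.pi fun _ => ν)) ∧ psum ν w N ≤ 1/4 := by
    intro N
    induction N with
    | zero =>
      constructor
      · intro k hk
        obtain rfl : k = 0 := by omega
        rw [hw0]; exact integrable_zero _ _ _
      · simp [psum, nint_cabs_zero ν hw0]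
    | succ N ih =>
      obtain ⟨c1, c2⟩ := conv_upto ν w u N hw0 hu0 ih.1 (fun k _ => hu.1 k)
      have hpt : ∀ k, w k = h k - conv w u k := fun k => congrFun heq k
      refine ⟨fun k hk => ?_, ?_⟩
      · rw [hpt k]; exact (hh.1 k).sub (c1 k hk)
      · have h1 : psum ν w (N+1) ≤ psum ν h (N+1) + psum ν (conv w u) (N+1) := by
          rw [psum, psum, psum, ← Finset.sum_add_distrib]
          refine Finset.sum_le_sum fun k hk => ?_
          have ck := c1 k (by simp at hk; omega)
          rw [nint, nint, nint, ← add_div, ← integral_add (cabs_integrable ν (hh.1 k)) (cabs_integrable ν ck)]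
          gcongr ?_ / _
          refine integral_mono ?_ ((hh.1 k).abs.add ck.abs) fun x => ?_
          · have := ((hh.1 k).sub ck).abs
            rw [← hpt k] at this
            exact this
          · have : w k x = h k x - conv w u k x := congrFun (hpt k) x
            simp only [cabs, this]
            exact abs_sub _ _
        have h2 := hh.psum_le (N+1)
        have h3 := hu.psum_le N
        have h4 : psum ν w N * psum ν u N ≤ 1/4 * (1/2) :=
          mul_le_mul ih.2 (h3.trans hun) (psum_nonneg ν u N) (by norm_num)
        linarith
  exact nice_of_psum (fun k => (key k).1 k le_rfl) fun N => (key N).2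

lemma starPow_zero_comp {F : CF E} (h0 : F 0 = 0) (m : ℕ) : starPow F (m+1) 0 = 0 :=
  starPow_eq_zero h0 _ _ (Nat.succ_pos m)

lemma starPow_upto {F : CF E} {N : ℕ} (h0 : F 0 = 0)
    (hF : ∀ k ≤ N, Integrable (F k) (Measure.pi fun _ => ν)) (m : ℕ) :
    (∀ k ≤ N, Integrable (starPow F (m+1) k) (Measure.pi fun _ => ν)) ∧
      psum ν (starPow F (m+1)) N ≤ psum ν F N ^ (m+1) := by
  induction m with
  | zero =>
    simp only [starPow, conv_unit]
    exact ⟨hF, by simp⟩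
  | succ m ih =>
    obtain ⟨a, b⟩ := conv_upto ν F (starPow F (m+1)) N h0 (starPow_zero_comp h0 m) hF ih.1
    refine ⟨fun k hk => a k (by omega), ?_⟩
    rw [pow_succ']
    exact ((psum_mono ν _ (Nat.le_succ N)).trans b).trans
      (mul_le_mul_of_nonneg_left ih.2 (psum_nonneg ν F N))

lemma starExp_expand {F : CF E} (h0 : F 0 = 0) {n K : ℕ} (h : n < K + 2) :
    starExp F n = unit n + F n +
      ∑ m ∈ range K, ((m+2).factorial : ℝ)⁻¹ • starPow F (m+2) n := by
  funext x
  rw [starExp_eq h0 h, Finset.sum_range_succ', Finset.sum_range_succ']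
  have : starPow F 1 = F := by simp [starPow, conv_unit]
  simp only [Pi.add_apply, Finset.sum_apply, Pi.smul_apply, smul_eq_mul, zero_add, this]
  simp [starPow]
  ring

lemma nice_log {F w : CF E} (h0 : F 0 = 0) (hw : Nice ν w) (hwn : cnorm ν w ≤ 1/4)
    (heq : starExp F = unit + w) : Nice ν F := by
  have key : ∀ N, (∀ k ≤ N, Integrable (F k) (Measure.pi fun _ => ν)) ∧ psum ν F N ≤ 1/2 := by
    intro N
    induction N with
    | zero =>
      constructor
      · intro k hk
        obtain rfl : k = 0 := by omega
        rw [h0]; exact integrable_zero _ _ _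
      · simp [psum, nint_cabs_zero ν h0]
    | succ N ih =>
      have hp : ∀ m, (∀ k ≤ N+1, Integrable (starPow F (m+2) k) (Measure.pi fun _ => ν)) ∧
          psum ν (starPow F (m+2)) (N+1) ≤ (1/2)^(m+2) := by
        intro m
        obtain ⟨a, b⟩ := starPow_upto h0 ih.1 m
        obtain ⟨c, d⟩ := conv_upto ν F (starPow F (m+1)) N h0 (starPow_zero_comp h0 m) ih.1 a
        refine ⟨c, d.trans ?_⟩
        rw [pow_succ' _ (m+1)]
        exact mul_le_mul ih.2 (b.trans (pow_le_pow_left₀ (psum_nonneg ν F N) ih.2 _))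
          (psum_nonneg ν _ N) (by norm_num)
      have hpt : ∀ k ≤ N+1, F k = w k -
          ∑ m ∈ range N, ((m+2).factorial : ℝ)⁻¹ • starPow F (m+2) k := by
        intro k hk
        have h1 := starExp_expand h0 (n := k) (K := N) (by omega)
        have h2 : starExp F k = unit k + w k := congrFun heq k
        rw [h2, add_assoc] at h1
        rw [add_left_cancel h1]
        abel
      have hint : ∀ k ≤ N+1, ∀ m ∈ range N, Integrable
          (((m+2).factorial : ℝ)⁻¹ • starPow F (m+2) k) (Measure.pi fun _ => ν) :=
        fun k hk m _ => ((hp m).1 k hk).smul _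
      have hFi : ∀ k ≤ N + 1, Integrable (F k) (Measure.pi fun _ => ν) := by
        intro k hk
        rw [hpt k hk]
        exact (hw.1 k).sub (integrable_finsetSum' _ (hint k hk))
      refine ⟨hFi, ?_⟩
      have h1 : psum ν F (N+1) ≤ psum ν w (N+1) +
          ∑ m ∈ range N, (1/2) * psum ν (starPow F (m+2)) (N+1) := by
        simp only [psum]
        simp_rw [Finset.mul_sum]
        rw [Finset.sum_comm, ← Finset.sum_add_distrib]
        refine Finset.sum_le_sum fun k hk => ?_
        have hk' : k ≤ N+1 := by simp at hk; omega
        simp only [nint, ← mul_div_assoc]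
        rw [← Finset.sum_div, ← add_div]
        gcongr ?_ / _
        simp_rw [← integral_const_mul]
        have hi2 : ∀ m ∈ range N, Integrable (fun x => 1/2 * cabs (starPow F (m+2)) k x)
            (Measure.pi fun _ => ν) := fun m _ => (((hp m).1 k hk').abs).const_mul _
        rw [← integral_finsetSum _ hi2, ← integral_add (cabs_integrable ν (hw.1 k)) (integrable_finsetSum _ hi2)]
        refine integral_mono (hFi k hk').abs ((hw.1 k).abs.add (integrable_finsetSum _ hi2)) fun x => ?_
        simp only [cabs]
        rw [hpt k hk']
        simp only [Pi.sub_apply, Finset.sum_apply, Pi.smul_apply, smul_eq_mul]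
        refine (abs_sub _ _).trans (add_le_add le_rfl ((Finset.abs_sum_le_sum_abs _ _).trans
          (Finset.sum_le_sum fun m _ => ?_)))
        rw [abs_mul]
        gcongr
        rw [abs_inv, Nat.abs_cast, one_div]
        gcongr
        exact_mod_cast (Nat.factorial_le (show 2 ≤ m + 2 by omega))
      have h2 : ∑ m ∈ range N, (1/2) * psum ν (starPow F (m+2)) (N+1) ≤ 1/4 := by
        calc _ ≤ ∑ m ∈ range N, (1/8 : ℝ) * (1/2)^m :=
              Finset.sum_le_sum fun m _ => by
                have := (hp m).2
                rw [pow_add] at this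
                nlinarith
          _ ≤ ∑' m : ℕ, (1/8 : ℝ) * (1/2)^m :=
              (summable_geometric_two.mul_left _).sum_le_tsum _ fun _ _ => by positivity
          _ = 1/4 := by rw [tsum_mul_left, tsum_geometric_two]; norm_num
      have h3 := hw.psum_le (N+1)
      linarith
  exact (nice_of_psum (fun k => (key k).1 k le_rfl) fun N => (key N).2).1


lemma conv_meas {F G : CF E} {N : ℕ} (hF0 : F 0 = 0) (hG0 : G 0 = 0)
    (hF : ∀ k ≤ N, Measurable (F k)) (hG : ∀ k ≤ N, Measurable (G k)) :
    ∀ k ≤ N + 1, Measurable (conv F G k) := by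
  intro k hk
  refine Finset.measurable_fun_sum _ fun I _ => ?_
  have hc : I.card + Iᶜ.card = k := by simp [Finset.card_add_card_compl]
  by_cases hi : I.card = 0
  · have : F I.card = 0 := by rw [hi]; exact hF0
    simp [this]
  by_cases hj : Iᶜ.card = 0
  · have : G Iᶜ.card = 0 := by rw [hj]; exact hG0
    simp [this]
  exact ((hF _ (by omega)).comp (meas_sub I)).mul ((hG _ (by omega)).comp (meas_sub Iᶜ))

lemma meas_log {F : CF E} (h0 : F 0 = 0) (hm : ∀ n, Measurable (starExp F n)) (n : ℕ) :
    Measurable (F n) := by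
  have key : ∀ N, ∀ k ≤ N, Measurable (F k) := by
    intro N
    induction N with
    | zero =>
      intro k hk
      obtain rfl : k = 0 := by omega
      rw [h0]; exact measurable_zero
    | succ N ih =>
      have h1 : ∀ m, ∀ k ≤ N, Measurable (starPow F (m+1) k) := by
        intro m
        induction m with
        | zero => simpa only [starPow, conv_unit] using ih
        | succ m ihm =>
          intro k hk
          exact conv_meas h0 (starPow_zero_comp h0 m) ih ihm k (by omega)
      intro k hk
      have he := starExp_expand h0 (n := k) (K := N) (by omega)
      have hF : F k = starExp F k - unit k -
          ∑ m ∈ range N, ((m+2).factorial : ℝ)⁻¹ • starPow F (m+2) k := by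
        rw [he]; abel
      rw [hF]
      refine ((hm k).sub measurable_const).sub ?_
      rw [Finset.sum_fn]
      refine Finset.measurable_fun_sum _ fun m _ => ?_
      exact (conv_meas h0 (starPow_zero_comp h0 m) ih (h1 m) k hk).const_smul _
  exact key n n le_rfl

end Meas

end CF

namespace CF

section Core
variable {E : Type} [MeasurableSpace E] {ν : Measure E} [SigmaFinite ν]

lemma starExp_zero (F : CF E) : starExp F 0 = unit 0 := by
  funext x; simp [starExp, starPow]

lemma core {u1 u2 g ω : CF E} {c ε : ℝ} (hω0 : ω 0 = 0) (h10 : u1 0 = 0) (h20 : u2 0 = 0)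
    (h1 : Nice ν u1) (h2 : Nice ν u2) (hg : Nice ν g)
    (hn1 : cnorm ν u1 ≤ ε) (hn2 : cnorm ν u2 ≤ ε) (hε : ε ≤ 1/48) (hcε : |1 - c| * (3 * ε) ≤ 1/16)
    (hgn : cnorm ν g ≤ 1/16)
    (heq : g + (1 - c) • unit = conv (conv (starExp ω - c • unit) (unit + u1)) (unit + u2)) :
    Nice ν ω ∧ L ν g + (1 - c) = (Real.exp (L ν ω) - c) * (1 + L ν u1) * (1 + L ν u2) := by
  obtain ⟨w, hw⟩ : ∃ w, w = starExp ω - unit := ⟨_, rfl⟩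
  have hW : starExp ω = unit + w := by rw [hw]; abel
  have hw0 : w 0 = 0 := by
    rw [hw, Pi.sub_apply, starExp_zero, sub_self]
  obtain ⟨u, hu⟩ : ∃ u, u = u1 + u2 + conv u1 u2 := ⟨_, rfl⟩
  have hu0 : u 0 = 0 := by
    funext x
    simp [hu, conv_zero_apply, h10, h20]
  have hε0 : 0 ≤ ε := (cnorm_nonneg ν u1).trans hn1
  have hun : Nice ν u := by
    rw [hu]; exact ((h1.add h2).1.add (h1.conv h2).1).1
  have hune : cnorm ν u ≤ 3 * ε := by
    have a1 := ((h1.add h2).1.add (h1.conv h2).1).2.1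
    rw [← hu] at a1
    have a2 := (h1.add h2).2.1
    have a3 := (h1.conv h2).2.1
    have a4 : cnorm ν u1 * cnorm ν u2 ≤ ε * ε := mul_le_mul hn1 hn2 (cnorm_nonneg ν u2) hε0
    nlinarith
  have hh := hg.add (hun.smul (-(1-c))).1
  have hhn : cnorm ν (g + (-(1-c)) • u) ≤ 1/8 := by
    have a1 := hh.2.1
    rw [(hun.smul (-(1-c))).2.1, abs_neg] at a1
    have a2 : |1 - c| * cnorm ν u ≤ |1 - c| * (3 * ε) :=
      mul_le_mul_of_nonneg_left hune (abs_nonneg _)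
    linarith
  have hweq : w = (g + (-(1-c)) • u) - conv w u := by
    have e1 : starExp ω - c • unit = w + (1 - c) • unit := by rw [hW]; module
    have e2 : conv (unit + u1) (unit + u2) = unit + u := by
      rw [hu, conv_add, conv_unit, add_conv, unit_conv]; abel
    rw [e1, conv_assoc, e2, conv_add, conv_unit, add_conv, smul_conv, unit_conv] at heq
    have : g = (w + (1 - c) • unit + (conv w u + (1 - c) • u)) - (1-c) • unit := by
      rw [← heq]; abel
    rw [this]
    module
  obtain ⟨nw, nwn⟩ := nice_linear hw0 hu0 hh.1 hun hhn (by linarith) hweq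
  have nω := nice_log hω0 nw nwn hW
  refine ⟨nω, ?_⟩
  have nW : Nice ν (starExp ω) := by rw [hW]; exact (nice_unit.1.add nw).1
  have nWc : starExp ω - c • unit = starExp ω + (-c) • unit := by module
  have b1 := nW.add (nice_unit (ν := ν).1.smul (-c)).1
  have b2 := nice_unit (ν := ν).1.add h1
  have b3 := nice_unit (ν := ν).1.add h2
  have b4 := b1.1.conv b2.1
  have b5 := b4.1.conv b3.1
  have b6 := hg.add (nice_unit (ν := ν).1.smul (1-c)).1
  have := congrArg (L ν) heq
  rw [nWc, b5.2.2, b4.2.2, b1.2.2, b2.2.2, b3.2.2, b6.2.2, (nice_unit.1.smul (1-c)).2.2,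
    (nice_unit.1.smul (-c)).2.2, nice_unit.2.2, L_starExp nω hω0] at this
  rw [mul_one, mul_one] at this
  rw [this]; ring

lemma nice_geo {F : CF E} {C q : ℝ} (hC : 0 ≤ C) (hq0 : 0 ≤ q) (hq : q ≤ 1/2) (h0 : F 0 = 0)
    (hi : ∀ k, Integrable (F (k+1)) (Measure.pi fun _ => ν))
    (hb : ∀ k, nint ν (cabs F) (k+1) ≤ C * q ^ (k+1)) :
    Nice ν F ∧ cnorm ν F ≤ 2 * C * q := by
  have hgeo := summable_geometric_of_lt_one hq0 (by linarith)
  refine nice_of_psum ?_ ?_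
  · intro k
    rcases k with _ | k
    · rw [h0]; exact integrable_zero _ _ _
    · exact hi k
  · intro N
    rw [psum, Finset.sum_range_succ', nint_cabs_zero ν h0, add_zero]
    calc _ ≤ ∑ k ∈ range N, (C * q) * q ^ k :=
          Finset.sum_le_sum fun k _ => (hb k).trans (le_of_eq (by ring))
      _ ≤ ∑' k, (C * q) * q ^ k := (hgeo.mul_left _).sum_le_tsum _ fun _ _ => by positivity
      _ = C * q * (1 - q)⁻¹ := by rw [tsum_mul_left, tsum_geometric_of_lt_one hq0 (by linarith)]
      _ ≤ C * q * 2 := by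
          gcongr
          rw [inv_le_comm₀ (by linarith) (by norm_num)]
          linarith
      _ = _ := by ring

lemma nice_ruelle [IsFiniteMeasure ν] {F : CF E} {C ξ : ℝ} (hm : ∀ k, Measurable (F k))
    (h0 : ∀ k x, 0 ≤ F k x) (hb : ∀ k x, F k x ≤ C * ξ ^ k) : Nice ν F := by
  have hi : ∀ k, Integrable (F k) (Measure.pi fun _ => ν) := fun k =>
    Integrable.of_bound (hm k).aestronglyMeasurable (C * ξ ^ k)
      (Filter.Eventually.of_forall fun x => by rw [Real.norm_of_nonneg (h0 k x)]; exact hb k x)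
  refine ⟨hi, ?_⟩
  refine ((Real.summable_pow_div_factorial (ξ * ν.real Set.univ)).mul_left C).of_nonneg_of_le
    (nint_cabs_nonneg ν F) fun k => ?_
  rw [nint, ← mul_div_assoc]
  gcongr ?_ / _
  calc _ ≤ ∫ x : Fin k → E, C * ξ ^ k ∂(Measure.pi fun _ => ν) := by
        refine integral_mono (hi k).abs (integrable_const _) fun x => ?_
        simp only [cabs]
        rw [abs_of_nonneg (h0 k x)]; exact hb k x
    _ = _ := by
        rw [integral_const, Measure.real, Measure.pi_univ]
        simp [Measure.real, mul_pow]
        ring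

lemma D_meas {F : CF E} (hm : ∀ k, Measurable (F k)) (x : E) (k : ℕ) : Measurable (D x F k) := by
  refine (hm (k+1)).comp (measurable_pi_lambda _ fun i => ?_)
  refine Fin.cases ?_ (fun i => ?_) i
  · simp
  · simpa using measurable_pi_apply i

lemma D2_symm {F : CF E} (h : IsSymm F) (x₁ x₂ : E) : D2 x₁ x₂ F = D2 x₂ x₁ F := by
  funext n y
  simp only [D2, D]
  rw [← h (n+1+1) (Equiv.swap 0 1)]
  congr 1
  funext i
  refine Fin.cases ?_ (fun i => ?_) i
  · simp
  · refine Fin.cases ?_ (fun i => ?_) i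
    · simp
    · have : Equiv.swap (0 : Fin (n+1+1)) 1 i.succ.succ = i.succ.succ :=
        Equiv.swap_apply_of_ne_of_ne (by simp) (by simp [Fin.ext_iff])
      simp [this]

end Core

section Euc
open Filter Topology
variable {d : ℕ}

lemma piRestrict_eq (Λ : Set (Euc d)) (k : ℕ) :
    (Measure.pi fun _ : Fin k => (volume : Measure (Euc d)).restrict Λ) =
      (Measure.pi fun _ : Fin k => (volume : Measure (Euc d))).restrict
        (Set.pi Set.univ fun _ => Λ) :=
  (Measure.restrict_pi_pi _ _).symm

lemma cover (k : ℕ) : AECover (Measure.pi fun _ : Fin k => (volume : Measure (Euc d))) atTop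
    (fun R : ℝ => Set.pi Set.univ fun _ => Metric.ball (0 : Euc d) R) where
  ae_eventually_mem := Eventually.of_forall fun y => by
    simp only [Set.mem_pi, Set.mem_univ, true_imp_iff]
    rw [eventually_all]
    intro i
    filter_upwards [eventually_gt_atTop ‖y i‖] with R hR
    simpa using hR
  measurableSet := fun R => MeasurableSet.univ_pi fun _ => measurableSet_ball

lemma int_bound {k : ℕ} {f : (Fin k → Euc d) → ℝ} (hm : Measurable f) {C : ℝ} (hC : 0 ≤ C)
    (h : ∀ R : ℝ, ∫⁻ y, ENNReal.ofReal |f y| ∂(piRestrict d (Metric.ball 0 R) k) ≤ ENNReal.ofReal C) :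
    Integrable f (Measure.pi fun _ => (volume : Measure (Euc d))) ∧
      ∫ y, |f y| ∂(Measure.pi fun _ => (volume : Measure (Euc d))) ≤ C := by
  have h' : ∀ R : ℝ, ∫⁻ y in (Set.pi Set.univ fun _ => Metric.ball (0 : Euc d) R), ‖f y‖ₑ
      ∂(Measure.pi fun _ => (volume : Measure (Euc d))) ≤ ENNReal.ofReal C := by
    intro R
    rw [← piRestrict_eq]
    simp only [Real.enorm_eq_ofReal_abs]
    exact h R
  have hi := (cover k).integrable_of_lintegral_enorm_bounded C hm.aestronglyMeasurable
    (Eventually.of_forall h')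
  refine ⟨hi, ?_⟩
  have ht := (cover k).lintegral_tendsto_of_countably_generated (hm.enorm.aemeasurable)
  have hle := le_of_tendsto ht (Eventually.of_forall h')
  have := integral_norm_eq_lintegral_enorm (μ := Measure.pi fun _ : Fin k => (volume : Measure (Euc d)))
    hm.aestronglyMeasurable
  simp only [Real.norm_eq_abs] at this
  rw [this]
  exact ENNReal.toReal_le_of_le_ofReal hC hle

lemma nint_restrict_le {F : CF (Euc d)} (h : Nice volume F) (Λ : Set (Euc d)) (k : ℕ) :
    nint (volume.restrict Λ) (cabs F) k ≤ nint volume (cabs F) k := by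
  rw [nint, nint, piRestrict_eq]
  gcongr ?_ / _
  exact setIntegral_le_integral (h.1 k).abs (Eventually.of_forall fun _ => abs_nonneg _)

lemma Nice.restrict {F : CF (Euc d)} (h : Nice volume F) (Λ : Set (Euc d)) :
    Nice (volume.restrict Λ) F := by
  refine ⟨fun k => ?_, h.2.of_nonneg_of_le (nint_cabs_nonneg _ F) (nint_restrict_le h Λ)⟩
  rw [piRestrict_eq]; exact (h.1 k).restrict

lemma L_tendsto {F : CF (Euc d)} (h : Nice volume F) :
    Tendsto (fun R : ℝ => L (volume.restrict (Metric.ball (0 : Euc d) R)) F) atTop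
      (𝓝 (L volume F)) := by
  refine tendsto_tsum_of_dominated_convergence (bound := nint volume (cabs F)) h.2 ?_ ?_
  · intro k
    refine Tendsto.const_mul _ ?_
    simp only [nint]
    refine Tendsto.div_const ?_ _
    simp_rw [piRestrict_eq]
    exact (cover k).integral_tendsto_of_countably_generated (h.1 k)
  · refine Eventually.of_forall fun R k => ?_
    have := (abs_nint_le (volume.restrict (Metric.ball (0 : Euc d) R)) F k).trans
      (nint_restrict_le h _ k)
    simpa using this

lemma F_cast (F : CF (Euc d)) {n m : ℕ} (h : n = m) (f : Fin m → Euc d) :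
    F n (f ∘ Fin.cast h) = F m f := by
  subst h; rfl

lemma janossy_zero (ρ : CF (Euc d)) (Λ : Set (Euc d)) :
    janossy d ρ Λ 0 ![] = L (volume.restrict Λ) ρ := by
  rw [janossy, L]
  congr 1; funext k
  have : ∀ y : Fin k → Euc d, ρ (0 + k) (Fin.append ![] y) = ρ k y := by
    intro y
    rw [← F_cast ρ (Nat.zero_add k) y]
    congr 1
    funext i
    rw [Fin.append_left_nil _ _ rfl]
  simp_rw [this, nint, piRestrict]
  ring

lemma janossy_one (ρ : CF (Euc d)) (Λ : Set (Euc d)) (x : Euc d) :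
    janossy d ρ Λ 1 ![x] = L (volume.restrict Λ) (D x ρ) := by
  rw [janossy, L]
  congr 1; funext k
  have : ∀ y : Fin k → Euc d, ρ (1 + k) (Fin.append ![x] y) = D x ρ k y := by
    intro y
    rw [D, ← F_cast ρ (Nat.add_comm 1 k)]
    congr 1
    rw [Fin.append_left_eq_cons]
    rfl
  simp_rw [this, nint, piRestrict]
  ring

lemma janossy_two (ρ : CF (Euc d)) (Λ : Set (Euc d)) (x₁ x₂ : Euc d) :
    janossy d ρ Λ 2 ![x₁, x₂] = L (volume.restrict Λ) (D2 x₂ x₁ ρ) := by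
  rw [janossy, L]
  congr 1; funext k
  have : ∀ y : Fin k → Euc d, ρ (2 + k) (Fin.append ![x₁, x₂] y) = D2 x₂ x₁ ρ k y := by
    intro y
    rw [D2, D, D, ← F_cast ρ (Nat.add_comm 2 k)]
    congr 1
    funext i
    rcases i with ⟨i, hi⟩
    rcases i with _ | _ | i
    · rfl
    · rfl
    · have e : (⟨i+1+1, hi⟩ : Fin (2+k)) = Fin.natAdd 2 ⟨i, by omega⟩ := by ext; simp; omega
      rw [e, Fin.append_right]
      have e2 : Fin.cast (Nat.add_comm 2 k) (Fin.natAdd 2 ⟨i, by omega⟩) =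
          (Fin.succ (Fin.succ (⟨i, by omega⟩ : Fin k))) := by ext; simp; omega
      rw [Function.comp_apply, e2, Fin.cons_succ, Fin.cons_succ]
  simp_rw [this, nint, piRestrict]
  ring

end Euc
end CF
open CF MeasureTheory in
/-- Theorem 3.1, expansion of the pair interaction. -/
theorem pair_interaction_expansion (d : ℕ) (hd : 1 ≤ d)
    (M A dr : ℝ) (hM : 0 < M) (hA : 0 < A) (hdr : 0 < dr) :
    ∃ D₀ > (0 : ℝ),
      ∀ (Dρ μ ξ r rad : ℝ) (ρ ρT : CF (Euc d)) (H : Euc d → Euc d → ℝ)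
        (ω : Euc d → Euc d → CF (Euc d)),
        0 < Dρ → Dρ ≤ D₀ → 0 < ξ → 0 < r → 0 < rad →
        ρ 0 = 1 → IsSymm ρ → (∀ n, Measurable (ρ n)) →
        (∀ n x, 0 ≤ ρ n x) →
        -- Ruelle bound
        (∀ (n : ℕ) (x : Fin n → Euc d), ρ n x ≤ ξ ^ n) →
        -- translation invariance
        (∀ (n : ℕ) (a : Euc d) (x : Fin n → Euc d), ρ n (fun i => x i + a) = ρ n x) →
        -- constant density
        (∀ x : Euc d, ρ 1 ![x] = r) →
        ρT 0 = 0 → IsSymm ρT → starExp ρT = ρ →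
        -- the pair interaction is symmetric and measurable
        (∀ x₁ x₂, H x₁ x₂ = H x₂ x₁) →
        Measurable (fun p : Euc d × Euc d => H p.1 p.2) →
        -- Assumption A for n = 1 and n = 2
        (∀ Δ : Set (Euc d), Bornology.IsBounded Δ →
          ∀ ε > (0 : ℝ), ∃ R₀ : ℝ, ∀ R ≥ R₀, ∀ x ∈ Δ,
            |janossy d ρ (Metric.ball 0 R) 1 ![x] /
                janossy d ρ (Metric.ball 0 R) 0 ![] - Real.exp μ| ≤ ε) →
        (∀ Δ : Set (Euc d), Bornology.IsBounded Δ →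
          ∀ ε > (0 : ℝ), ∃ R₀ : ℝ, ∀ R ≥ R₀, ∀ x₁ ∈ Δ, ∀ x₂ ∈ Δ,
            |janossy d ρ (Metric.ball 0 R) 2 ![x₁, x₂] /
                janossy d ρ (Metric.ball 0 R) 0 ![] -
              Real.exp (2 * μ - H x₁ x₂)| ≤ ε) →
        -- Assumption B for m = 1 and m = 2
        (∀ Λ : Set (Euc d), Bornology.IsBounded Λ → MeasurableSet Λ →
          ∀ (k : ℕ), 1 ≤ k → ∀ x : Euc d,
            ∫⁻ y, ENNReal.ofReal |ρT (k + 1) (Fin.cons x y)| ∂(piRestrict d Λ k) ≤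
              ENNReal.ofReal (k.factorial * M * A * Dρ ^ k * r)) →
        (∀ Λ : Set (Euc d), Bornology.IsBounded Λ → MeasurableSet Λ →
          ∀ (k : ℕ), 1 ≤ k → ∀ x₁ x₂ : Euc d,
            ∫⁻ y, ENNReal.ofReal |ρT (k + 2) (Fin.cons x₁ (Fin.cons x₂ y))|
                ∂(piRestrict d Λ k) ≤
              ENNReal.ofReal ((k + 1).factorial * M * A ^ 2 * Dρ ^ k * r ^ 2)) →
        -- Assumption C at distance `rad`
        (∀ x₁ x₂ : Euc d, rad ≤ dist x₁ x₂ → r ^ 2 ≤ dr * ρ 2 ![x₁, x₂]) →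
        -- the two-point kernels
        (∀ x₁ x₂ : Euc d, ρ 2 ![x₁, x₂] ≠ 0 →
          ω x₁ x₂ 0 = 0 ∧ IsSymm (ω x₁ x₂) ∧
            (ρ 2 ![x₁, x₂])⁻¹ • D2 x₁ x₂ ρT =
              conv (conv (starExp (ω x₁ x₂) - (r ^ 2 / ρ 2 ![x₁, x₂]) • unit)
                  (r⁻¹ • D x₁ ρT))
                (r⁻¹ • D x₂ ρT)) →
        ∀ x₁ x₂ : Euc d, rad ≤ dist x₁ x₂ →
          Summable (fun k : ℕ =>
            |(-1 : ℝ) ^ k / k.factorial * ∫ y, ω x₁ x₂ k y ∂(piVol d k)|) ∧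
          H x₁ x₂ = -Real.log (ρ 2 ![x₁, x₂] / r ^ 2) -
            ∑' k : ℕ, (-1 : ℝ) ^ k / k.factorial *
              ∫ y, ω x₁ x₂ k y ∂(piVol d k) := by
  set D₀ : ℝ := 1 / (4 + 96 * M * A * (1 + dr) + 64 * dr * M * A ^ 2) with hD₀
  have hden : 0 < 4 + 96 * M * A * (1 + dr) + 64 * dr * M * A ^ 2 := by positivity
  have hD₀pos : 0 < D₀ := by positivity
  refine ⟨D₀, hD₀pos, ?_⟩
  intro Dρ μ ξ r rad ρ ρT H ω hDρ hDle hξ hr hrad hρ0 hρs hρm hρn hρb _ hρ1 hT0 hTs hexp _ _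
    hA1 hA2 hB1 hB2 hC hω x₁ x₂ hx
  have hsmall : Dρ * (4 + 96 * M * A * (1 + dr) + 64 * dr * M * A ^ 2) ≤ 1 := by
    calc _ ≤ D₀ * (4 + 96 * M * A * (1 + dr) + 64 * dr * M * A ^ 2) := by gcongr
      _ = 1 := by rw [hD₀]; field_simp
  have q1 : 0 < Dρ * (M * A) := by positivity
  have q2 : 0 < Dρ * (M * A) * dr := by positivity
  have q3 : 0 < Dρ * (dr * M * A ^ 2) := by positivity
  have hp := hC x₁ x₂ hx
  have hppos : 0 < ρ 2 ![x₁, x₂] := by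
    have : 0 < dr * ρ 2 ![x₁, x₂] := lt_of_lt_of_le (by positivity) hp
    exact (pos_iff_pos_of_mul_pos this).1 hdr
  obtain ⟨hω0, -, hωeq⟩ := hω x₁ x₂ hppos.ne'
  set p := ρ 2 ![x₁, x₂] with hpdef
  set c := r ^ 2 / p with hc
  have hcpos : 0 < c := by positivity
  have hcle : c ≤ dr := by rw [hc, div_le_iff₀ hppos]; exact hp
  have hTm : ∀ n, Measurable (ρT n) := meas_log hT0 (by rw [hexp]; exact hρm)
  -- derivative identities
  have hDρ1 : ∀ x, D x ρ = conv (D x ρT) ρ := fun x => by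
    have := D_starExp x hT0
    rwa [hexp] at this
  have hDρ2 : D2 x₂ x₁ ρ = conv (D2 x₁ x₂ ρT) ρ + conv (D x₁ ρT) (conv (D x₂ ρT) ρ) := by
    rw [D2_symm hTs x₁ x₂, D2, hDρ1, D_conv, hDρ1]; rfl
  have hT1 : ∀ x y, D x ρT 0 y = r := by
    intro x y
    have h1 := congrFun (congrFun (hDρ1 x) 0) y
    rw [conv_zero_apply, hρ0] at h1
    have h2 : D x ρ 0 y = r := by
      rw [← hρ1 x, D]
      congr 1
      funext i
      fin_cases i
      rfl
    rw [h2] at h1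
    simpa using h1.symm
  -- one-point kernels
  have hu : ∀ x, (r⁻¹ • D x ρT - unit : CF (Euc d)) 0 = 0 ∧ Nice volume (r⁻¹ • D x ρT - unit) ∧
      cnorm volume (r⁻¹ • D x ρT - unit) ≤ 2 * (M * A) * Dρ := by
    intro x
    have h0 : (r⁻¹ • D x ρT - unit : CF (Euc d)) 0 = 0 := by
      funext y
      simp [hT1, unit, hr.ne']
    have hk : ∀ k, (r⁻¹ • D x ρT - unit : CF (Euc d)) (k+1) = r⁻¹ • D x ρT (k+1) := by
      intro k
      funext y; simp [unit]
    have hb : ∀ k, Integrable (D x ρT (k+1)) (Measure.pi fun _ => volume) ∧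
        ∫ y, |D x ρT (k+1) y| ∂(Measure.pi fun _ => volume) ≤
          (k+1).factorial * M * A * Dρ ^ (k+1) * r := fun k =>
      int_bound (D_meas hTm x (k+1)) (by positivity)
        (fun R => hB1 _ Metric.isBounded_ball measurableSet_ball (k+1) (by omega) x)
    refine ⟨h0, nice_geo (by positivity) hDρ.le (by nlinarith) h0 (fun k => ?_) (fun k => ?_)⟩
    · rw [hk]; exact (hb k).1.smul _
    · rw [nint, div_le_iff₀ (by positivity)]
      simp only [cabs, hk, Pi.smul_apply, smul_eq_mul, abs_mul]
      rw [integral_const_mul, abs_of_pos (inv_pos.2 hr), inv_mul_le_iff₀ hr]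
      refine (hb k).2.trans (le_of_eq (by ring))
  obtain ⟨u10, u1n, u1b⟩ := hu x₁
  obtain ⟨u20, u2n, u2b⟩ := hu x₂
  have e1 : ∀ x, unit + (r⁻¹ • D x ρT - unit) = r⁻¹ • D x ρT := fun x => by abel
  -- two-point kernel
  have hG0 : (p⁻¹ • D2 x₁ x₂ ρT - (1 - c) • unit : CF (Euc d)) 0 = 0 := by
    funext y
    rw [hωeq]
    simp only [Pi.sub_apply, conv_zero_apply, starExp_zero]
    simp [hT1, unit, hr.ne']
  have hg : Nice volume (p⁻¹ • D2 x₁ x₂ ρT - (1 - c) • unit) ∧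
      cnorm volume (p⁻¹ • D2 x₁ x₂ ρT - (1 - c) • unit) ≤ 2 * (dr * M * A ^ 2) * (2 * Dρ) := by
    have hk : ∀ k, (p⁻¹ • D2 x₁ x₂ ρT - (1 - c) • unit : CF (Euc d)) (k+1) = p⁻¹ • D2 x₁ x₂ ρT (k+1) := by
      intro k
      funext y; simp [unit]
    have hb : ∀ k, Integrable (D2 x₁ x₂ ρT (k+1)) (Measure.pi fun _ => volume) ∧
        ∫ y, |D2 x₁ x₂ ρT (k+1) y| ∂(Measure.pi fun _ => volume) ≤
          (k+1+1).factorial * M * A ^ 2 * Dρ ^ (k+1) * r ^ 2 := fun k =>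
      int_bound (D_meas (D_meas hTm x₂) x₁ (k+1)) (by positivity)
        (fun R => hB2 _ Metric.isBounded_ball measurableSet_ball (k+1) (by omega) x₂ x₁)
    refine nice_geo (by positivity) (by positivity) (by nlinarith) hG0 (fun k => ?_) (fun k => ?_)
    · rw [hk]; exact (hb k).1.smul _
    · rw [nint, div_le_iff₀ (by positivity)]
      simp only [cabs, hk, Pi.smul_apply, smul_eq_mul, abs_mul]
      rw [integral_const_mul, abs_of_pos (inv_pos.2 hppos), inv_mul_le_iff₀ hppos]
      refine (hb k).2.trans ?_
      have f1 : ((k+1+1).factorial : ℝ) ≤ 2 ^ (k+1) * (k+1).factorial := by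
        rw [Nat.factorial_succ (k+1)]
        push_cast
        gcongr
        have : k + 1 + 1 ≤ 2 ^ (k+1) := (k+1).lt_two_pow_self
        exact_mod_cast this
      calc ((k+1+1).factorial : ℝ) * M * A ^ 2 * Dρ ^ (k+1) * r ^ 2
          ≤ (2 ^ (k+1) * (k+1).factorial) * M * A ^ 2 * Dρ ^ (k+1) * (dr * p) := by gcongr
        _ = _ := by rw [mul_pow]; ring
  obtain ⟨gn, gb⟩ := hg
  have hcore := core (ν := volume) (c := c) (ε := 2 * (M * A) * Dρ) hω0 u10 u20 u1n u2n gn u1b u2b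
    (by nlinarith) (by
      have : |1 - c| ≤ 1 + dr := by
        rw [abs_le]; constructor <;> linarith
      calc |1 - c| * (3 * (2 * (M * A) * Dρ)) ≤ (1 + dr) * (3 * (2 * (M * A) * Dρ)) := by gcongr
        _ ≤ 1 / 16 := by nlinarith) (by nlinarith)
    (by rw [e1, e1, ← hωeq]; abel)
  obtain ⟨nω, hL⟩ := hcore
  -- niceness of the derivatives
  have nD : ∀ x, Nice volume (D x ρT) ∧
      L volume (D x ρT) = r * (1 + L volume (r⁻¹ • D x ρT - unit)) := by
    intro x
    have a := nice_unit (ν := (volume : Measure (Euc d))).1.add (hu x).2.1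
    have b := a.1.smul r
    rw [a.2.2, nice_unit.2.2] at b
    have : r • (unit + (r⁻¹ • D x ρT - unit)) = D x ρT := by
      rw [e1, smul_smul, mul_inv_cancel₀ hr.ne', one_smul]
    rw [this] at b
    exact ⟨b.1, b.2.2⟩
  have nD2 : Nice volume (D2 x₁ x₂ ρT) ∧ L volume (D2 x₁ x₂ ρT) =
      p * (L volume (p⁻¹ • D2 x₁ x₂ ρT - (1 - c) • unit) + (1 - c)) := by
    have a0 := nice_unit (ν := (volume : Measure (Euc d))).1.smul (1 - c)
    have a := gn.add a0.1
    have b := a.1.smul p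
    rw [a.2.2, a0.2.2, nice_unit.2.2, mul_one] at b
    have : p • (p⁻¹ • D2 x₁ x₂ ρT - (1 - c) • unit + (1 - c) • unit) = D2 x₁ x₂ ρT := by
      rw [sub_add_cancel, smul_smul, mul_inv_cancel₀ hppos.ne', one_smul]
    rw [this] at b
    exact ⟨b.1, b.2.2⟩
  -- finite volume identities
  have hfin : ∀ R : ℝ, IsFiniteMeasure ((volume : Measure (Euc d)).restrict (Metric.ball 0 R)) :=
    fun R => ⟨by rw [Measure.restrict_apply_univ]; exact measure_ball_lt_top⟩
  have nρ : ∀ R : ℝ, Nice (volume.restrict (Metric.ball (0 : Euc d) R)) ρ := fun R => by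
    haveI := hfin R
    exact nice_ruelle (C := 1) (ξ := ξ) hρm hρn (by simpa using hρb)
  have j1 : ∀ (R : ℝ) x, janossy d ρ (Metric.ball 0 R) 1 ![x] =
      L (volume.restrict (Metric.ball (0 : Euc d) R)) (D x ρT) *
        janossy d ρ (Metric.ball 0 R) 0 ![] := by
    intro R x
    rw [janossy_one, janossy_zero, hDρ1, (((nD x).1.restrict _).conv (nρ R)).2.2]
  have j2 : ∀ (R : ℝ), janossy d ρ (Metric.ball 0 R) 2 ![x₁, x₂] =
      (L (volume.restrict (Metric.ball (0 : Euc d) R)) (D2 x₁ x₂ ρT) +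
        L (volume.restrict (Metric.ball (0 : Euc d) R)) (D x₁ ρT) *
        L (volume.restrict (Metric.ball (0 : Euc d) R)) (D x₂ ρT)) *
        janossy d ρ (Metric.ball 0 R) 0 ![] := by
    intro R
    have a1 := (nD2.1.restrict (Metric.ball (0 : Euc d) R)).conv (nρ R)
    have a2 := ((nD x₂).1.restrict (Metric.ball (0 : Euc d) R)).conv (nρ R)
    have a3 := ((nD x₁).1.restrict (Metric.ball (0 : Euc d) R)).conv a2.1
    rw [janossy_two, janossy_zero, hDρ2, (a1.1.add a3.1).2.2, a1.2.2, a3.2.2, a2.2.2]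
    ring
  have jne : ∀ᶠ R : ℝ in Filter.atTop, janossy d ρ (Metric.ball 0 R) 0 ![] ≠ 0 := by
    obtain ⟨R₀, hR₀⟩ := hA1 {x₁} Bornology.isBounded_singleton (Real.exp μ / 2) (by positivity)
    filter_upwards [Filter.eventually_ge_atTop R₀] with R hR h0
    have := hR₀ R hR x₁ rfl
    rw [h0, div_zero, zero_sub, abs_neg, abs_of_pos (Real.exp_pos μ)] at this
    linarith [Real.exp_pos μ]
  have lim1 : ∀ x, L volume (D x ρT) = Real.exp μ := by
    intro x
    have t1 := L_tendsto (nD x).1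
    refine tendsto_nhds_unique t1 ?_
    rw [Metric.tendsto_atTop']
    intro ε hε
    obtain ⟨R₀, hR₀⟩ := hA1 {x} Bornology.isBounded_singleton (ε / 2) (by positivity)
    obtain ⟨R₁, hR₁⟩ := Filter.eventually_atTop.1 jne
    refine ⟨max R₀ R₁, fun R hR => ?_⟩
    have a := hR₀ R ((le_max_left _ _).trans hR.le) x rfl
    have b := hR₁ R ((le_max_right _ _).trans hR.le)
    rw [j1, mul_div_cancel_right₀ _ b] at a
    rw [Real.dist_eq]
    linarith
  have lim2 : L volume (D2 x₁ x₂ ρT) + L volume (D x₁ ρT) * L volume (D x₂ ρT) =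
      Real.exp (2 * μ - H x₁ x₂) := by
    have t1 := (L_tendsto nD2.1).add ((L_tendsto (nD x₁).1).mul (L_tendsto (nD x₂).1))
    refine tendsto_nhds_unique t1 ?_
    rw [Metric.tendsto_atTop']
    intro ε hε
    obtain ⟨R₀, hR₀⟩ := hA2 {x₁, x₂} (Set.toFinite _).isBounded (ε / 2) (by positivity)
    obtain ⟨R₁, hR₁⟩ := Filter.eventually_atTop.1 jne
    refine ⟨max R₀ R₁, fun R hR => ?_⟩
    have a := hR₀ R ((le_max_left _ _).trans hR.le) x₁ (by simp) x₂ (by simp)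
    have b := hR₁ R ((le_max_right _ _).trans hR.le)
    rw [j2, mul_div_cancel_right₀ _ b] at a
    rw [Real.dist_eq]
    linarith
  have hterm : ∀ k : ℕ, (-1 : ℝ) ^ k / k.factorial * ∫ y, ω x₁ x₂ k y ∂(piVol d k) =
      (-1 : ℝ) ^ k * nint volume (ω x₁ x₂) k := fun k => by
    rw [nint, piVol]; ring
  simp_rw [hterm]
  refine ⟨nω.summable_norm, ?_⟩
  change _ = _ - L volume (ω x₁ x₂)
  have k1 := (nD x₁).2
  have k2 := (nD x₂).2
  rw [lim1] at k1 k2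
  have key : Real.exp (2 * μ - H x₁ x₂) =
      p / r ^ 2 * Real.exp (L volume (ω x₁ x₂)) * Real.exp (2 * μ) := by
    rw [← lim2, nD2.2, hL, lim1, lim1, two_mul, Real.exp_add]
    have m1 : 1 + L volume (r⁻¹ • D x₁ ρT - unit) = Real.exp μ / r := by
      rw [k1]; field_simp
    have m2 : 1 + L volume (r⁻¹ • D x₂ ρT - unit) = Real.exp μ / r := by
      rw [k2]; field_simp
    rw [m1, m2, hc]
    field_simp
    ring
  have := congrArg Real.log key
  rw [Real.log_exp, Real.log_mul (by positivity) (by positivity),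
    Real.log_mul (by positivity) (by positivity), Real.log_exp, Real.log_exp] at this
  linarith
end

section
/- (Kirkwood closure process: graph representation of the kernels ω, equations (4.5)–(4.6).) Let d ≥ 1, ς > 0 and let g : ℝ^d → [0,∞) be an even function; set h := g − 1. Define ρ^{(0)} = 1 and ρ^{(n)}(x₁,…,x_n) := ς^n ∏_{1 ≤ i < j ≤ n} g(x_i − x_j), and let ρ_T ∈ A₀ be the unique functional with ρ = exp∗ ρ_T. (i) For x ∈ ℝ^d, let ω_x ∈ A₀ be the unique functional with D_x ρ_T = ς · exp∗ ω_x. Then for every k ≥ 1: ω_x^{(k)}(y₁,…,y_k) = ς^k Σ_{G ∈ 𝒞_{1,k}} ∏_{{i,j} ∈ E(G)} h(z_i − z_j), where the vertex set is {0,1,…,k} with z₀ = x and z_i = y_i for 1 ≤ i ≤ k, and 𝒞_{1,k} is the set of connected simple graphs on {0,1,…,k} whose induced subgraph on {1,…,k} is still connected. (ii) For x₁, x₂ ∈ ℝ^d with g(x₁ − x₂) ≠ 0, let ω_{(x₁,x₂)} ∈ A₀ be the unique functional satisfying D_{x₁,x₂} ρ_T / ρ^{(2)}(x₁,x₂) =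 ( exp∗ ω_{(x₁,x₂)} − (ς²/ρ^{(2)}(x₁,x₂)) 𝟙 ) ∗ ( D_{x₁} ρ_T / ς ) ∗ ( D_{x₂} ρ_T / ς ), where ρ^{(2)}(x₁,x₂) = ς² g(x₁−x₂). Then for every k ≥ 1: ω_{(x₁,x₂)}^{(k)}(y₁,…,y_k) = ς^k Σ_{G ∈ 𝒞_{2,k}} ∏_{{i,j} ∈ E(G)} h(z_i − z_j), where the vertex set is {−1,0,1,…,k} with z_{−1} = x₁, z₀ = x₂, z_i = y_i for 1 ≤ i ≤ k, and 𝒞_{2,k} is the set of connected simple graphs on this vertex set that contain no edge between the vertices −1 and 0 and whose induced subgraph on {1,…,k} is still connected. -/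
open MeasureTheory Finset

namespace KK
open CF Finset

variable {E : Type}

noncomputable def hat (F : CF E) {n : ℕ} (z : Fin n → E) (S : Finset (Fin n)) : ℝ :=
  F S.card (sub z S)

theorem hat_eq (F : CF E) {n : ℕ} (z : Fin n → E) (S : Finset (Fin n)) (m : ℕ)
    (hm : S.card = m) (e : Fin m → Fin n) (he : StrictMono e) (hmem : ∀ i, e i ∈ S) :
    hat F z S = F m (z ∘ e) := by
  subst hm
  have := Finset.orderEmbOfFin_unique rfl hmem he
  subst this
  rfl

theorem hat_map (F : CF E) {n : ℕ} (x : E) (y : Fin n → E) (J : Finset (Fin n)) :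
    hat F (Fin.cons x y : Fin (n+1) → E) (J.map (Fin.succEmb n)) = hat F y J := by
  rw [hat_eq F _ _ J.card (by simp) (fun i => (J.orderEmbOfFin rfl i).succ)]
  · rfl
  · intro i j hij; simpa using hij
  · intro i; simp

theorem hat_insert (F : CF E) {n : ℕ} (x : E) (y : Fin n → E) (J : Finset (Fin n)) :
    hat F (Fin.cons x y : Fin (n+1) → E) (insert 0 (J.map (Fin.succEmb n))) = hat (D x F) y J := by
  rw [hat_eq F _ _ (J.card+1) (by rw [card_insert_of_notMem]; simp; simp)
    (Fin.cons 0 (fun i => (J.orderEmbOfFin rfl i).succ))]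
  · unfold hat D
    congr 1
    funext i
    refine Fin.cases ?_ (fun i => ?_) i
    · simp
    · simp [sub]
  · intro i j
    refine Fin.cases ?_ (fun i => ?_) i <;> refine Fin.cases ?_ (fun j => ?_) j <;> simp
  · intro i
    refine Fin.cases ?_ (fun i => ?_) i <;> simp

theorem sum_finset_succ {M : Type*} [AddCommMonoid M] {n : ℕ} (f : Finset (Fin (n+1)) → M) :
    ∑ I, f I = ∑ J : Finset (Fin n),
      (f (insert 0 (J.map (Fin.succEmb n))) + f (J.map (Fin.succEmb n))) := by
  have h0 : (univ : Finset (Fin (n+1))) = insert 0 (univ.map (Fin.succEmb n)) := by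
    ext i; refine Fin.cases ?_ (fun i => ?_) i <;> simp
  rw [← Finset.powerset_univ, h0, Finset.sum_powerset_insert (by simp), add_comm,
    ← Finset.sum_add_distrib, eq_comm]
  refine Finset.sum_bij (fun J _ => J.map (Fin.succEmb n)) ?_ ?_ ?_ ?_
  · intro J _; simp only [mem_powerset]; exact Finset.map_subset_map.2 (subset_univ _)
  · intro a _ b _ h; exact Finset.map_injective _ h
  · intro b hb
    obtain ⟨u, -, hu⟩ := Finset.subset_map_iff.1 (mem_powerset.1 hb)
    exact ⟨u, mem_univ _, hu.symm⟩
  · intros; rfl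

theorem compl_map {n : ℕ} (J : Finset (Fin n)) :
    (J.map (Fin.succEmb n))ᶜ = insert 0 (Jᶜ.map (Fin.succEmb n)) := by
  ext i; refine Fin.cases ?_ (fun i => ?_) i <;> simp
theorem compl_insert {n : ℕ} (J : Finset (Fin n)) :
    (insert 0 (J.map (Fin.succEmb n)))ᶜ = Jᶜ.map (Fin.succEmb n) := by
  ext i; refine Fin.cases ?_ (fun i => ?_) i <;> simp

theorem conv_def (F G : CF E) {n : ℕ} (z : Fin n → E) :
    conv F G n z = ∑ I, hat F z I * hat G z Iᶜ := rfl

theorem D_conv (x : E) (F G : CF E) : D x (conv F G) = conv (D x F) G + conv F (D x G) := by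
  funext n y
  show conv F G (n+1) (Fin.cons x y) = conv (D x F) G n y + conv F (D x G) n y
  rw [conv_def, sum_finset_succ, conv_def, conv_def, ← Finset.sum_add_distrib]
  refine Finset.sum_congr rfl fun J _ => ?_
  rw [compl_map, compl_insert, hat_insert, hat_insert, hat_map, hat_map]

theorem conv_zero_apply (F G : CF E) (z : Fin 0 → E) : conv F G 0 z = F 0 z * G 0 z := by
  rw [conv_def, Fintype.sum_unique]
  rw [hat_eq F z _ 0 (by rfl) Fin.elim0 (fun i => i.elim0) (fun i => i.elim0)]
  rw [hat_eq G z _ 0 (by rfl) Fin.elim0 (fun i => i.elim0) (fun i => i.elim0)]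
  congr 2 <;> exact Subsingleton.elim _ _

theorem cf_ext_n {F G : CF E} (n : ℕ) (h : ∀ x, D x F n = D x G n) : F (n+1) = G (n+1) := by
  funext y
  have := congrFun (h (y 0)) (Fin.tail y)
  simpa [D] using this

theorem D_add (x : E) (F G : CF E) : D x (F + G) = D x F + D x G := rfl
theorem D_smul (x : E) (c : ℝ) (F : CF E) : D x (c • F) = c • D x F := rfl
theorem D_unit (x : E) : D x (unit : CF E) = 0 := by
  funext n y; simp [D, unit]

theorem conv_add_left (F G H : CF E) : conv (F + G) H = conv F H + conv G H := by
  funext n y; simp [conv, add_mul, Finset.sum_add_distrib]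
theorem conv_add_right (F G H : CF E) : conv F (G + H) = conv F G + conv F H := by
  funext n y; simp [conv, mul_add, Finset.sum_add_distrib]
theorem conv_smul_left (c : ℝ) (F H : CF E) : conv (c • F) H = c • conv F H := by
  funext n y; simp [conv, mul_assoc, Finset.mul_sum]
theorem conv_zero_left (H : CF E) : conv 0 H = 0 := by
  funext n y; simp [conv]

theorem conv_comm (F G : CF E) : conv F G = conv G F := by
  funext n
  induction n generalizing F G with
  | zero => funext z; rw [conv_zero_apply, conv_zero_apply, mul_comm]
  | succ n ih =>
    refine cf_ext_n n fun x => ?_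
    rw [D_conv, D_conv, Pi.add_apply, Pi.add_apply, ih, ih F, add_comm]

theorem conv_assoc (F G H : CF E) : conv (conv F G) H = conv F (conv G H) := by
  funext n
  induction n generalizing F G H with
  | zero => funext z; simp only [conv_zero_apply, mul_assoc]
  | succ n ih =>
    refine cf_ext_n n fun x => ?_
    simp only [D_conv, conv_add_left, conv_add_right, Pi.add_apply, ih, add_assoc]

theorem unit_conv (F : CF E) : conv unit F = F := by
  funext n
  induction n generalizing F with
  | zero => funext z; simp [conv_zero_apply, unit]
  | succ n ih =>
    refine cf_ext_n n fun x => ?_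
    rw [D_conv, D_unit, conv_zero_left, zero_add, ih]

/-- The convolution ring. -/
def CA (E : Type) : Type := CF E

noncomputable instance : AddCommGroup (CA E) := inferInstanceAs (AddCommGroup (CF E))
noncomputable instance : Module ℝ (CA E) := inferInstanceAs (Module ℝ (CF E))

noncomputable instance : CommRing (CA E) :=
  { (inferInstance : AddCommGroup (CA E)) with
    mul := fun F G => conv F G
    one := (unit : CF E)
    mul_comm := conv_comm
    mul_assoc := conv_assoc
    one_mul := unit_conv
    mul_one := fun F => (conv_comm F unit).trans (unit_conv F)
    left_distrib := conv_add_right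
    right_distrib := conv_add_left
    zero_mul := conv_zero_left
    mul_zero := fun F => (conv_comm F 0).trans (conv_zero_left F) }

noncomputable instance : Algebra ℝ (CA E) :=
  Algebra.ofModule (fun c F G => conv_smul_left c F G)
    (fun c F G => by
      rw [mul_comm, mul_comm F G]; exact conv_smul_left c G F)

theorem mul_apply' (F G : CA E) : F * G = conv F G := rfl

/-- derivation -/
noncomputable def DD (x : E) : CA E →ₗ[ℝ] CA E where
  toFun F := D x F
  map_add' := D_add x
  map_smul' c F := D_smul x c F

theorem DD_mul (x : E) (F G : CA E) : DD x (F * G) = DD x F * G + F * DD x G := D_conv x F G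
theorem DD_one (x : E) : DD x (1 : CA E) = 0 := D_unit x

noncomputable def ev (F : CA E) (n : ℕ) (z : Fin n → E) : ℝ := (F : CF E) n z
theorem ev_add (F G : CA E) (n : ℕ) (z : Fin n → E) : ev (F + G) n z = ev F n z + ev G n z := rfl
theorem ev_sub (F G : CA E) (n : ℕ) (z : Fin n → E) : ev (F - G) n z = ev F n z - ev G n z := rfl
theorem ev_smul (c : ℝ) (F : CA E) (n : ℕ) (z : Fin n → E) : ev (c • F) n z = c * ev F n z := rfl
theorem ev_mul (F G : CA E) (n : ℕ) (z : Fin n → E) : ev (F * G) n z =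
    ∑ I : Finset (Fin n), ev F I.card (sub z I) * ev G Iᶜ.card (sub z Iᶜ) := rfl
theorem ev_DD (x : E) (F : CA E) (n : ℕ) (z : Fin n → E) :
    ev (DD x F) n z = ev F (n+1) (Fin.cons x z) := rfl
theorem ev_ext {F G : CA E} (h : ∀ n z, ev F n z = ev G n z) : F = G :=
  funext fun n => funext fun z => h n z
theorem ev_succ (F : CA E) (n : ℕ) (z : Fin (n+1) → E) :
    ev F (n+1) z = ev (DD (z 0) F) n (Fin.tail z) := by
  rw [ev_DD, Fin.cons_self_tail]
noncomputable def ev0 : CA E →ₗ[ℝ] ℝ where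
  toFun F := ev F 0 Fin.elim0
  map_add' _ _ := rfl
  map_smul' _ _ := rfl
theorem ev_zero (F : CA E) (z : Fin 0 → E) : ev F 0 z = ev0 F := by
  rw [Subsingleton.elim z Fin.elim0]; rfl
theorem ev0_mul (F G : CA E) : ev0 (F * G) = ev0 F * ev0 G := conv_zero_apply _ _ _
theorem ev0_one : ev0 (1 : CA E) = 1 := rfl

theorem ca_ext {F G : CA E} (h0 : ev0 F = ev0 G) (h : ∀ x, DD x F = DD x G) : F = G := by
  funext n
  cases n with
  | zero => funext z; rw [Subsingleton.elim z Fin.elim0]; exact h0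
  | succ n => exact cf_ext_n n fun x => congrFun (h x) n

theorem ode_unique {F G : CA E} {a : E → CA E} (h0 : ev0 F = ev0 G)
    (hF : ∀ x, DD x F = a x * F) (hG : ∀ x, DD x G = a x * G) : F = G := by
  refine ev_ext fun n => ?_
  induction n using Nat.strong_induction_on with
  | _ n ih =>
    intro z
    cases n with
    | zero => rw [ev_zero, ev_zero, h0]
    | succ n =>
      rw [ev_succ, ev_succ, hF, hG, ev_mul, ev_mul]
      refine Finset.sum_congr rfl fun I _ => ?_
      rw [ih _ (Nat.lt_succ_of_le ((Finset.card_le_univ _).trans (by simp)))]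

theorem starPow_eq (F : CA E) (m : ℕ) : (starPow F m : CA E) = F ^ m := by
  induction m with
  | zero => rfl
  | succ m ih => rw [pow_succ', ← ih]; rfl

theorem DD_pow (x : E) (F : CA E) (m : ℕ) :
    DD x (F ^ (m+1)) = ((m : ℝ) + 1) • (DD x F * F ^ m) := by
  induction m with
  | zero => simp
  | succ m ih =>
    rw [pow_succ', DD_mul, ih, mul_smul_comm]
    have : F * (DD x F * F ^ m) = DD x F * F ^ (m+1) := by ring
    rw [this, add_smul _ (1:ℝ), one_smul]
    push_cast
    rw [add_smul _ (1:ℝ), add_smul _ (1:ℝ), one_smul]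
    abel

theorem pow_vanish (F : CA E) (h0 : ev0 F = 0) (m n : ℕ) (hmn : n < m) (z : Fin n → E) :
    ev (F ^ m) n z = 0 := by
  induction m generalizing n with
  | zero => omega
  | succ m ih =>
    cases n with
    | zero => rw [ev_zero, pow_succ', ev0_mul, h0, zero_mul]
    | succ n =>
      rw [ev_succ, DD_pow, ev_smul, ev_mul, Finset.sum_eq_zero, mul_zero]
      intro I _
      rw [ih _ (lt_of_le_of_lt ((Finset.card_le_univ _).trans (by simp))
        (Nat.lt_of_succ_lt_succ hmn)) _, mul_zero]

noncomputable def ex (F : CA E) : CA E := (starExp F : CF E)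

theorem ex_apply (F : CA E) (h0 : ev0 F = 0) (n N : ℕ) (h : n ≤ N) (z : Fin n → E) :
    ev (ex F) n z = ∑ m ∈ range (N+1), ((m.factorial : ℝ))⁻¹ * ev (F ^ m) n z := by
  have : ev (ex F) n z = ∑ m ∈ range (n+1), ((m.factorial : ℝ))⁻¹ * ev (F ^ m) n z := by
    have : ∀ m, ev (F ^ m) n z = starPow F m n z := fun m => by rw [← starPow_eq]; rfl
    simp only [this]; rfl
  rw [this]
  refine Finset.sum_subset (by intro a; simp; omega) fun m _ hm => ?_
  rw [pow_vanish F h0, mul_zero]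
  simp at hm; omega

theorem ev0_ex (F : CA E) (h0 : ev0 F = 0) : ev0 (ex F) = 1 := by
  have := ex_apply F h0 0 0 le_rfl Fin.elim0
  refine this.trans ?_
  simp
  rfl

theorem DD_ex (F : CA E) (h0 : ev0 F = 0) (x : E) : DD x (ex F) = DD x F * ex F := by
  refine ev_ext fun n y => ?_
  rw [ev_DD, ex_apply F h0 (n+1) (n+1) le_rfl, Finset.sum_range_succ']
  have h2 : ev (F^0) (n+1) (Fin.cons x y : Fin (n+1) → E) = 0 := by
    rw [← ev_DD, pow_zero, DD_one]; rfl
  rw [h2, mul_zero, add_zero, ev_mul]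
  have h3 : ∀ m : ℕ, ((m+1).factorial : ℝ)⁻¹ * ev (F ^ (m+1)) (n+1) (Fin.cons x y : Fin (n+1) → E)
      = (m.factorial : ℝ)⁻¹ * ev (DD x F * F ^ m) n y := by
    intro m
    rw [← ev_DD, DD_pow, ev_smul, Nat.factorial_succ]
    push_cast
    have : (m : ℝ) + 1 ≠ 0 := by positivity
    field_simp
  simp only [h3, ev_mul, Finset.mul_sum]
  rw [Finset.sum_comm]
  refine Finset.sum_congr rfl fun I _ => ?_
  rw [ex_apply F h0 Iᶜ.card n ((Finset.card_le_univ _).trans (by simp)) (sub y Iᶜ), Finset.mul_sum]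
  refine Finset.sum_congr rfl fun m _ => ?_
  ring

theorem ex_add (F G : CA E) (hF : ev0 F = 0) (hG : ev0 G = 0) : ex (F + G) = ex F * ex G := by
  have hFG : ev0 (F + G) = 0 := by rw [map_add, hF, hG, add_zero]
  refine ode_unique (a := fun x => DD x (F + G)) ?_ (fun x => DD_ex _ hFG x) fun x => ?_
  · rw [ev0_mul, ev0_ex _ hFG, ev0_ex _ hF, ev0_ex _ hG, mul_one]
  · rw [DD_mul, DD_ex _ hF, DD_ex _ hG, map_add]; ring

theorem ex_zero : ex (0 : CA E) = 1 :=
  ode_unique (a := fun _ => 0) (by rw [ev0_ex _ (map_zero _), ev0_one])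
    (fun x => by rw [DD_ex _ (map_zero _), map_zero]) (fun x => by rw [DD_one, zero_mul])

theorem ex_neg_mul (F : CA E) (hF : ev0 F = 0) : ex (-F) * ex F = 1 := by
  rw [← ex_add _ _ (by rw [map_neg, hF, neg_zero]) hF, neg_add_cancel, ex_zero]

theorem ex_inj (F G : CA E) (hF : ev0 F = 0) (hG : ev0 G = 0) (h : ex F = ex G) : F = G := by
  refine ca_ext (hF.trans hG.symm) fun x => ?_
  have h1 := DD_ex F hF x
  have h2 := DD_ex G hG x
  rw [← h, h1] at h2
  have h3 := ex_neg_mul F hF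
  linear_combination ex (-F) * h2 + (DD x G - DD x F) * h3

/-- multiplicative character -/
noncomputable def Mm (m : E → ℝ) : CA E →ₗ[ℝ] CA E where
  toFun F := fun n y => (∏ i, m (y i)) * ev F n y
  map_add' F G := by funext n y; exact mul_add _ _ _
  map_smul' c F := by funext n y; exact mul_left_comm _ _ _

theorem ev_Mm (m : E → ℝ) (F : CA E) (n : ℕ) (z : Fin n → E) :
    ev (Mm m F) n z = (∏ i, m (z i)) * ev F n z := rfl

theorem DD_Mm (m : E → ℝ) (x : E) (F : CA E) : DD x (Mm m F) = m x • Mm m (DD x F) := by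
  refine ev_ext fun n y => ?_
  rw [ev_DD, ev_Mm, ev_smul, ev_Mm, ev_DD, Fin.prod_univ_succ]; simp [mul_assoc]

theorem ev0_Mm (m : E → ℝ) (F : CA E) : ev0 (Mm m F) = ev0 F := by
  rw [← ev_zero _ Fin.elim0, ev_Mm, ev_zero]; simp

theorem Mm_mul (m : E → ℝ) (F G : CA E) : Mm m (F * G) = Mm m F * Mm m G := by
  refine ev_ext fun n => ?_
  induction n generalizing F G with
  | zero => intro z; rw [ev_zero, ev_zero, ev0_Mm, ev0_mul, ev0_mul, ev0_Mm, ev0_Mm]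
  | succ n ih =>
    intro z
    rw [ev_succ, ev_succ, DD_Mm, DD_mul, DD_mul, map_add, DD_Mm, DD_Mm, smul_mul_assoc,
      mul_smul_comm, ← smul_add, ev_smul, ev_smul, ev_add, ev_add, ih, ih]

theorem Mm_ex (m : E → ℝ) (F : CA E) (hF : ev0 F = 0) : Mm m (ex F) = ex (Mm m F) := by
  have hM : ev0 (Mm m F) = 0 := by rw [ev0_Mm, hF]
  refine ode_unique (a := fun x => DD x (Mm m F)) ?_ (fun x => ?_) fun x => DD_ex _ hM x
  · rw [ev0_Mm, ev0_ex _ hF, ev0_ex _ hM]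
  · rw [DD_Mm, DD_ex _ hF, Mm_mul, DD_Mm, smul_mul_assoc]

/-- algebraic core, one point -/
theorem core1 (s : ℝ) (hs : s ≠ 0) (r t w : CA E) (x : E) (m : E → ℝ)
    (ht : ev0 t = 0) (hr : ex t = r) (hw : ev0 w = 0)
    (hDr : DD x r = s • Mm m r) (hDt : DD x t = s • ex w) : w = Mm m t - t := by
  subst hr
  have hM : ev0 (Mm m t) = 0 := by rw [ev0_Mm, ht]
  rw [DD_ex _ ht, hDt, Mm_ex _ _ ht, smul_mul_assoc, ← ex_add _ _ hw ht] at hDr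
  have := ex_inj _ _ (by rw [map_add, hw, ht, add_zero]) hM (smul_right_injective _ hs hDr)
  rw [← this]; ring

theorem core2 (s : ℝ) (hs : s ≠ 0) (r t w1 w2 w : CA E) (x1 x2 : E) (m1 m2 : E → ℝ)
    (hm : m2 x1 ≠ 0)
    (ht : ev0 t = 0) (hr : ex t = r) (hw1 : ev0 w1 = 0) (hw2 : ev0 w2 = 0) (hw : ev0 w = 0)
    (hDr1 : DD x1 r = s • Mm m1 r) (hDr2 : DD x2 r = s • Mm m2 r)
    (hDt1 : DD x1 t = s • ex w1) (hDt2 : DD x2 t = s • ex w2)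
    (hDt : DD x1 (DD x2 t) = s ^ 2 • ((m2 x1 • ex w - 1) * ex w1 * ex w2)) :
    w = Mm m2 (Mm m1 t) - Mm m1 t - Mm m2 t + t := by
  have e1 := core1 s hs r t w1 x1 m1 ht hr hw1 hDr1 hDt1
  have e2 := core1 s hs r t w2 x2 m2 ht hr hw2 hDr2 hDt2
  subst hr
  have hM1 : ev0 (Mm m1 t) = 0 := by rw [ev0_Mm, ht]
  have hM : ev0 (Mm m2 (Mm m1 t)) = 0 := by rw [ev0_Mm, hM1]
  have a1 : DD x1 (DD x2 (ex t)) = (s^2 * m2 x1) • ex (Mm m2 (Mm m1 t)) := by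
    rw [hDr2, map_smul, DD_Mm, hDr1, map_smul, Mm_ex _ _ ht, Mm_ex _ _ hM1, smul_smul, smul_smul]
    congr 1; ring
  have a2 : DD x1 (DD x2 (ex t)) = (s^2 * m2 x1) • (ex w * ex w1 * ex w2 * ex t) := by
    rw [DD_ex _ ht, DD_mul, DD_ex _ ht, hDt, hDt1, hDt2]
    simp only [Algebra.smul_def, map_mul, map_pow]
    ring
  rw [a1] at a2
  have h3 := smul_right_injective _ (mul_ne_zero (pow_ne_zero 2 hs) hm) a2
  have h12 : ev0 (w + w1) = 0 := by rw [map_add, hw, hw1, add_zero]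
  have h123 : ev0 (w + w1 + w2) = 0 := by rw [map_add, h12, hw2, add_zero]
  rw [← ex_add _ _ hw hw1, ← ex_add _ _ h12 hw2, ← ex_add _ _ h123 ht] at h3
  have := ex_inj _ _ hM (by rw [map_add, h123, ht, add_zero]) h3
  rw [e1, e2] at this
  rw [this]; ring

section graphs
open Classical

noncomputable def W {V : Type} [Fintype V] [LinearOrder V] (G : SimpleGraph V) (q : V → V → ℝ) : ℝ :=
  ∏ i, ∏ j, if i < j ∧ G.Adj i j then q i j else 1

theorem W_filter {V : Type} [Fintype V] [LinearOrder V] (G : SimpleGraph V) (q : V → V → ℝ) :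
    ∏ p ∈ (Finset.univ : Finset (V × V)).filter (fun p => p.1 < p.2 ∧ G.Adj p.1 p.2), q p.1 p.2
      = W G q := by
  rw [Finset.prod_filter, Fintype.prod_prod_type]; rfl

section decomp
variable {A B V : Type} [Fintype A] [Fintype B] [Fintype V] [LinearOrder A] [LinearOrder B]
  [LinearOrder V] (f : A ↪o V) (f' : B ↪o V)

theorem prod_split (hd : ∀ a b, f a ≠ f' b) (hc : ∀ v, (∃ a, f a = v) ∨ ∃ b, f' b = v)
    (F : V → ℝ) : ∏ v, F v = (∏ a, F (f a)) * ∏ b, F (f' b) := by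
  have hb : Function.Bijective (Sum.elim f f') := by
    constructor
    · rintro (a | a) (b | b) h
      · simpa using h
      · exact absurd h (hd _ _)
      · exact absurd h.symm (hd _ _)
      · simpa using h
    · intro v
      rcases hc v with ⟨a, h⟩ | ⟨a, h⟩
      · exact ⟨Sum.inl a, h⟩
      · exact ⟨Sum.inr a, h⟩
  rw [← (Equiv.ofBijective _ hb).prod_comp, Fintype.prod_sum_type]
  rfl

theorem W_split (hd : ∀ a b, f a ≠ f' b) (hc : ∀ v, (∃ a, f a = v) ∨ ∃ b, f' b = v)
    (G : SimpleGraph V) (hG : ∀ a b, ¬ G.Adj (f a) (f' b)) (q : V → V → ℝ) :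
    W G q = W (G.comap f) (fun i j => q (f i) (f j)) * W (G.comap f') (fun i j => q (f' i) (f' j)) := by
  have hG' : ∀ a b, ¬ G.Adj (f' b) (f a) := fun a b h => hG a b h.symm
  unfold W
  rw [prod_split f f' hd hc]
  congr 1 <;> refine Finset.prod_congr rfl fun i _ => ?_ <;> rw [prod_split f f' hd hc] <;> simp [hG, hG']

theorem reach_closed {G : SimpleGraph V} {s : Set V} (hs : ∀ u v, u ∈ s → G.Adj u v → v ∈ s)
    {u v : V} (hu : u ∈ s) (h : G.Reachable u v) : v ∈ s := by
  rw [SimpleGraph.reachable_iff_reflTransGen] at h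
  induction h with
  | refl => exact hu
  | tail _ h ih => exact hs _ _ ih h

theorem fiber_sum (hd : ∀ a b, f a ≠ f' b) (hc : ∀ v, (∃ a, f a = v) ∨ ∃ b, f' b = v) (a0 : A)
    (q : V → V → ℝ) :
    ∑ G ∈ (univ : Finset (SimpleGraph V)).filter
        (fun G => ∀ v, G.Reachable (f a0) v ↔ ∃ a, f a = v), W G q
      = (∑ H ∈ (univ : Finset (SimpleGraph A)).filter (fun H => H.Connected),
          W H (fun i j => q (f i) (f j))) *
        ∑ K : SimpleGraph B, W K (fun i j => q (f' i) (f' j)) := by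
  rw [Finset.sum_mul_sum, ← Finset.sum_product']
  have hcross : ∀ G : SimpleGraph V, (∀ v, G.Reachable (f a0) v ↔ ∃ a, f a = v) →
      ∀ a b, ¬ G.Adj (f a) (f' b) := by
    intro G hG a b h
    have h1 := (hG (f a)).2 ⟨a, rfl⟩
    obtain ⟨c, hc⟩ := (hG (f' b)).1 (h1.trans h.reachable)
    exact hd _ _ hc
  have hcr2 : ∀ (H : SimpleGraph A) (K : SimpleGraph B) a b,
      ¬ (H.map f.toEmbedding ⊔ K.map f'.toEmbedding).Adj (f a) (f' b) := by
    intro H K a b h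
    rw [SimpleGraph.sup_adj, SimpleGraph.map_adj, SimpleGraph.map_adj] at h
    rcases h with ⟨u, v, -, -, h⟩ | ⟨u, v, -, h, -⟩
    · exact hd _ _ h
    · exact hd _ _ h.symm
  have hc1 : ∀ (H : SimpleGraph A) (K : SimpleGraph B),
      (H.map f.toEmbedding ⊔ K.map f'.toEmbedding).comap f = H := by
    intro H K
    ext a b
    rw [SimpleGraph.comap_adj, SimpleGraph.sup_adj, SimpleGraph.map_adj, SimpleGraph.map_adj]
    constructor
    · rintro (⟨u, v, h, h1, h2⟩ | ⟨u, v, h, h1, h2⟩)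
      · rw [← f.injective h1, ← f.injective h2]; exact h
      · exact absurd h1.symm (hd _ _)
    · intro h; exact Or.inl ⟨a, b, h, rfl, rfl⟩
  have hc2 : ∀ (H : SimpleGraph A) (K : SimpleGraph B),
      (H.map f.toEmbedding ⊔ K.map f'.toEmbedding).comap f' = K := by
    intro H K
    ext a b
    rw [SimpleGraph.comap_adj, SimpleGraph.sup_adj, SimpleGraph.map_adj, SimpleGraph.map_adj]
    constructor
    · rintro (⟨u, v, h, h1, h2⟩ | ⟨u, v, h, h1, h2⟩)
      · exact absurd h1 (hd _ _)
      · rw [← f'.injective h1, ← f'.injective h2]; exact h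
    · intro h; exact Or.inr ⟨a, b, h, rfl, rfl⟩
  refine Finset.sum_bij' (fun G _ => (G.comap f, G.comap f'))
    (fun p _ => p.1.map f.toEmbedding ⊔ p.2.map f'.toEmbedding) ?_ ?_ ?_ ?_ ?_
  · intro G hG
    have hG := (mem_filter.1 hG).2
    simp only [mem_product, mem_filter, mem_univ, true_and, and_true]
    have key : ∀ v, G.Reachable (f a0) v → ∀ a, f a = v → (G.comap f).Reachable a0 a := by
      intro v h
      rw [SimpleGraph.reachable_iff_reflTransGen] at h
      induction h with
      | refl => intro a h; rw [f.injective h]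
      | @tail b c hb hbc ih =>
        intro a ha
        obtain ⟨b', rfl⟩ := (hG b).1 ((SimpleGraph.reachable_iff_reflTransGen _ _).2 hb)
        refine (ih b' rfl).trans (SimpleGraph.Adj.reachable ?_)
        rw [SimpleGraph.comap_adj, ha]; exact hbc
    haveI : Nonempty A := ⟨a0⟩
    refine SimpleGraph.Connected.mk fun a b => ?_
    exact (key _ ((hG _).2 ⟨a, rfl⟩) a rfl).symm.trans (key _ ((hG _).2 ⟨b, rfl⟩) b rfl)
  · rintro ⟨H, K⟩ hp
    simp only [mem_product, mem_filter, mem_univ, true_and, and_true] at hp ⊢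
    intro v
    constructor
    · intro h
      refine reach_closed (s := {v | ∃ a, f a = v}) ?_ ⟨a0, rfl⟩ h
      rintro _ v ⟨a, rfl⟩ h
      rcases hc v with h1 | ⟨b, rfl⟩
      · exact h1
      · exact absurd h (hcr2 H K a b)
    · rintro ⟨a, rfl⟩
      have : H ≤ (H.map f.toEmbedding ⊔ K.map f'.toEmbedding).comap f := (hc1 H K).ge
      exact (hp.preconnected a0 a).map ⟨f, fun {a b} h => this h⟩
  · intro G hG
    have hG := hcross G (mem_filter.1 hG).2
    ext u v
    rw [SimpleGraph.sup_adj, SimpleGraph.map_adj, SimpleGraph.map_adj]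
    constructor
    · rintro (⟨u, v, h, rfl, rfl⟩ | ⟨u, v, h, rfl, rfl⟩) <;> exact h
    · intro h
      rcases hc u with ⟨a, rfl⟩ | ⟨a, rfl⟩ <;> rcases hc v with ⟨b, rfl⟩ | ⟨b, rfl⟩
      · exact Or.inl ⟨a, b, h, rfl, rfl⟩
      · exact absurd h (hG _ _)
      · exact absurd h.symm (hG _ _)
      · exact Or.inr ⟨a, b, h, rfl, rfl⟩
  · rintro ⟨H, K⟩ _
    exact Prod.ext (hc1 H K) (hc2 H K)
  · intro G hG
    exact W_split f f' hd hc G (hcross G (mem_filter.1 hG).2) q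
end decomp

/-- connected graph functional -/
noncomputable def CC (s : ℝ) (q : E → E → ℝ) : CA E := fun n z =>
  s ^ n * ∑ G ∈ (univ : Finset (SimpleGraph (Fin n))).filter (fun G => G.Connected),
    W G (fun i j => q (z i) (z j))
noncomputable def RR (s : ℝ) (q : E → E → ℝ) : CA E := fun n z =>
  s ^ n * ∑ G : SimpleGraph (Fin n), W G (fun i j => q (z i) (z j))

theorem ev_CC (s : ℝ) (q : E → E → ℝ) (n : ℕ) (z : Fin n → E) : ev (CC s q) n z =
  s ^ n * ∑ G ∈ (univ : Finset (SimpleGraph (Fin n))).filter (fun G => G.Connected),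
    W G (fun i j => q (z i) (z j)) := rfl
theorem ev_RR (s : ℝ) (q : E → E → ℝ) (n : ℕ) (z : Fin n → E) : ev (RR s q) n z =
  s ^ n * ∑ G : SimpleGraph (Fin n), W G (fun i j => q (z i) (z j)) := rfl

theorem ev0_CC (s : ℝ) (q : E → E → ℝ) : ev0 (CC s q) = 0 := by
  rw [← ev_zero _ Fin.elim0, ev_CC, Finset.sum_eq_zero, mul_zero]
  intro G hG
  obtain ⟨i⟩ := (mem_filter.1 hG).2.nonempty
  exact i.elim0

theorem ev0_RR (s : ℝ) (q : E → E → ℝ) : ev0 (RR s q) = 1 := by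
  rw [← ev_zero _ Fin.elim0, ev_RR, Fintype.sum_unique]
  simp [W]

theorem RR_decomp (s : ℝ) (q : E → E → ℝ) (n : ℕ) (z : Fin (n+1) → E) :
    ev (RR s q) (n+1) z = ∑ S : Finset (Fin (n+1)),
      if 0 ∈ S then hat (CC s q) z S * hat (RR s q) z Sᶜ else 0 := by
  rw [ev_RR, ← Finset.sum_fiberwise (s := univ)
    (g := fun G : SimpleGraph (Fin (n+1)) => univ.filter (fun v => G.Reachable 0 v)),
    Finset.mul_sum]
  refine Finset.sum_congr rfl fun S _ => ?_
  split_ifs with h0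
  · have hS : ∀ v, v ∈ S ↔ ∃ a, S.orderEmbOfFin rfl a = v := by
      intro v
      have := Finset.range_orderEmbOfFin S rfl
      rw [← Finset.mem_coe, ← this]; rfl
    have hSc : ∀ v, v ∈ Sᶜ ↔ ∃ a, Sᶜ.orderEmbOfFin rfl a = v := by
      intro v
      have := Finset.range_orderEmbOfFin Sᶜ rfl
      rw [← Finset.mem_coe, ← this]; rfl
    obtain ⟨a0, ha0⟩ := (hS 0).1 h0
    have := fiber_sum (S.orderEmbOfFin rfl) (Sᶜ.orderEmbOfFin rfl) ?_ ?_ a0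
      (fun i j => q (z i) (z j))
    · have e1 : hat (CC s q) z S = s ^ S.card *
          ∑ H ∈ (univ : Finset (SimpleGraph (Fin S.card))).filter (fun H => H.Connected),
          W H (fun i j => q (z (S.orderEmbOfFin rfl i)) (z (S.orderEmbOfFin rfl j))) := rfl
      have e2 : hat (RR s q) z Sᶜ = s ^ Sᶜ.card *
          ∑ H : SimpleGraph (Fin Sᶜ.card),
          W H (fun i j => q (z (Sᶜ.orderEmbOfFin rfl i)) (z (Sᶜ.orderEmbOfFin rfl j))) := rfl
      have e3 : S.card + Sᶜ.card = n + 1 := by simpa using Finset.card_add_card_compl S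
      rw [e1, e2, mul_mul_mul_comm, ← pow_add, e3, ← this]
      congr 1
      refine Finset.sum_congr ?_ fun _ _ => rfl
      ext G
      simp only [mem_filter, mem_univ, true_and, ha0, ← hS, Finset.ext_iff]
    · intro a b h
      have h1 := (hS _).2 ⟨a, rfl⟩
      have h2 := (hSc _).2 ⟨b, rfl⟩
      rw [← h] at h2
      exact (mem_compl.1 h2) h1
    · intro v
      rw [← hS, ← hSc, mem_compl]; exact Classical.em _
  · rw [Finset.sum_eq_zero, mul_zero]
    intro G hG
    exfalso; apply h0
    rw [← (mem_filter.1 hG).2]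
    simp

theorem ex_CC (s : ℝ) (q : E → E → ℝ) : ex (CC s q) = RR s q := by
  refine ode_unique (a := fun x => DD x (CC s q)) ?_ (fun x => DD_ex _ (ev0_CC s q) x) fun x => ?_
  · rw [ev0_RR, ev0_ex _ (ev0_CC s q)]
  · refine ev_ext fun n y => ?_
    rw [ev_DD, RR_decomp, sum_finset_succ, ev_mul]
    refine Finset.sum_congr rfl fun J _ => ?_
    rw [if_pos (by simp), if_neg (by simp), add_zero, compl_insert]
    exact congrArg₂ _ (hat_insert (CC s q) x y J) (hat_map (RR s q) x y Jᶜ)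

def glue {n : ℕ} (T : Finset (Fin n)) (H : SimpleGraph (Fin n)) : SimpleGraph (Fin (n+1)) where
  Adj u v := (∃ i ∈ T, u = 0 ∧ v = i.succ) ∨ (∃ i ∈ T, v = 0 ∧ u = i.succ) ∨
    ∃ i j, H.Adj i j ∧ u = i.succ ∧ v = j.succ
  symm := ⟨by
    rintro u v (h | h | ⟨i, j, h, h1, h2⟩)
    · exact Or.inr (Or.inl h)
    · exact Or.inl h
    · exact Or.inr (Or.inr ⟨j, i, h.symm, h2, h1⟩)⟩
  loopless := ⟨by
    rintro u (⟨i, -, rfl, h⟩ | ⟨i, -, rfl, h⟩ | ⟨i, j, h, rfl, h2⟩)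
    · exact (Fin.succ_ne_zero _ h.symm).elim
    · exact (Fin.succ_ne_zero _ h.symm).elim
    · rw [Fin.succ_inj.1 h2] at h; exact H.loopless.irrefl _ h⟩

theorem glue_zero_succ {n : ℕ} (T : Finset (Fin n)) (H : SimpleGraph (Fin n)) (i : Fin n) :
    (glue T H).Adj 0 i.succ ↔ i ∈ T := by
  simp [glue, (Fin.succ_ne_zero _).symm]
theorem glue_succ_succ {n : ℕ} (T : Finset (Fin n)) (H : SimpleGraph (Fin n)) (i j : Fin n) :
    (glue T H).Adj i.succ j.succ ↔ H.Adj i j := by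
  simp [glue]

theorem comap_glue {n : ℕ} (T : Finset (Fin n)) (H : SimpleGraph (Fin n)) :
    (glue T H).comap Fin.succ = H := by
  ext i j; rw [SimpleGraph.comap_adj, glue_succ_succ]

theorem glue_comap {n : ℕ} (G : SimpleGraph (Fin (n+1))) :
    glue (univ.filter fun i => G.Adj 0 i.succ) (G.comap Fin.succ) = G := by
  ext u v
  refine Fin.cases ?_ (fun i => ?_) u <;> refine Fin.cases ?_ (fun j => ?_) v
  · simp
  · rw [glue_zero_succ]; simp
  · rw [SimpleGraph.adj_comm, glue_zero_succ, SimpleGraph.adj_comm]; simp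
  · rw [glue_succ_succ]; rfl

theorem sum_glue {n : ℕ} (F : SimpleGraph (Fin (n+1)) → ℝ) :
    ∑ G, F G = ∑ T : Finset (Fin n), ∑ H : SimpleGraph (Fin n), F (glue T H) := by
  rw [← Fintype.sum_prod_type' (f := fun T H => F (glue T H))]
  refine (Finset.sum_bij' (fun p _ => glue p.1 p.2)
    (fun G _ => (univ.filter fun i => G.Adj 0 i.succ, G.comap Fin.succ)) ?_ ?_ ?_ ?_ ?_).symm
  · simp
  · simp
  · rintro ⟨T, H⟩ _
    refine Prod.ext ?_ (comap_glue T H)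
    ext i; simp [glue_zero_succ]
  · intro G _; exact glue_comap G
  · intros; rfl

theorem W_glue {n : ℕ} (T : Finset (Fin n)) (H : SimpleGraph (Fin n)) (q : E → E → ℝ) (x : E)
    (y : Fin n → E) :
    W (glue T H) (fun i j => q ((Fin.cons x y : Fin (n+1) → E) i) ((Fin.cons x y : Fin (n+1) → E) j))
      = (∏ i ∈ T, q x (y i)) * W H (fun i j => q (y i) (y j)) := by
  unfold W
  simp only [Fin.prod_univ_succ, glue_zero_succ, glue_succ_succ, Fin.cons_zero, Fin.cons_succ,
    Fin.succ_pos, Fin.succ_lt_succ_iff, lt_irrefl, false_and, if_false, one_mul, true_and,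
    Fin.not_lt_zero]
  congr 1
  simp [Finset.prod_ite_mem]

theorem RR_succ (s : ℝ) (q : E → E → ℝ) (x : E) :
    DD x (RR s q) = s • Mm (fun u => 1 + q x u) (RR s q) := by
  refine ev_ext fun n y => ?_
  rw [ev_DD, ev_smul, ev_Mm, ev_RR, ev_RR, sum_glue]
  simp only [W_glue, ← Finset.mul_sum]
  rw [← Finset.sum_mul, Finset.prod_one_add, Finset.powerset_univ]
  ring

theorem conn_induce_range {V X : Type} (G : SimpleGraph V) (f : X → V) (hf : Function.Injective f) :
    (G.induce (Set.range f)).Connected ↔ (G.comap f).Connected := by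
  let e : G.comap f ≃g G.induce (Set.range f) := ⟨Equiv.ofInjective f hf, Iff.rfl⟩
  exact e.connected_iff.symm

theorem glue_connected {n : ℕ} (T : Finset (Fin n)) (H : SimpleGraph (Fin n)) (hH : H.Connected)
    (hT : T.Nonempty) : (glue T H).Connected := by
  obtain ⟨t, ht⟩ := hT
  have h1 : ∀ i : Fin n, (glue T H).Reachable 0 i.succ := by
    intro i
    have a : (glue T H).Reachable 0 t.succ := ((glue_zero_succ T H t).2 ht).reachable
    exact a.trans ((hH.preconnected t i).map ⟨Fin.succ, fun {a b} h => (glue_succ_succ T H a b).2 h⟩)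
  have h2 : ∀ u, (glue T H).Reachable 0 u := by
    intro u; refine Fin.cases (SimpleGraph.Reachable.refl _) h1 u
  exact SimpleGraph.Connected.mk fun u v => (h2 u).symm.trans (h2 v)

theorem conn_has_nbr {V : Type} [Nontrivial V] (G : SimpleGraph V) (hG : G.Connected) (u : V) :
    ∃ v, G.Adj u v := by
  obtain ⟨w, hw⟩ := exists_ne u
  by_contra! h
  have := hG.preconnected u w
  rw [SimpleGraph.reachable_iff_reflTransGen] at this
  rcases Relation.ReflTransGen.cases_head this with h1 | ⟨c, h1, -⟩
  · exact hw h1.symm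
  · exact h c h1

theorem glue_nbr {n : ℕ} (hn : 1 ≤ n) (T : Finset (Fin n)) (H : SimpleGraph (Fin n))
    (h : (glue T H).Connected) : T.Nonempty := by
  haveI : Nontrivial (Fin (n+1)) := Fin.nontrivial_iff_two_le.2 (by omega)
  obtain ⟨v, hv⟩ := conn_has_nbr _ h 0
  revert hv
  refine Fin.cases (fun h => (h.ne rfl).elim) (fun i h => ⟨i, (glue_zero_succ T H i).1 h⟩) v

theorem cond1 {k : ℕ} (hk : 1 ≤ k) (T : Finset (Fin k)) (H : SimpleGraph (Fin k)) :
    ((glue T H).Connected ∧ ((glue T H).induce {v : Fin (k+1) | v ≠ 0}).Connected) ↔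
      T.Nonempty ∧ H.Connected := by
  have e : {v : Fin (k+1) | v ≠ 0} = Set.range Fin.succ := by
    rw [Fin.range_succ]; rfl
  rw [e, conn_induce_range _ _ (Fin.succ_injective k), comap_glue]
  exact ⟨fun h => ⟨glue_nbr hk T H h.1, h.2⟩, fun h => ⟨glue_connected T H h.2 h.1, h.2⟩⟩

theorem cond2 {k : ℕ} (hk : 1 ≤ k) (T : Finset (Fin (k+1))) (T' : Finset (Fin k))
    (H : SimpleGraph (Fin k)) :
    ((glue T (glue T' H)).Connected ∧ ¬ (glue T (glue T' H)).Adj 0 1 ∧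
      ((glue T (glue T' H)).induce {v : Fin (k+2) | v ≠ 0 ∧ v ≠ 1}).Connected) ↔
      0 ∉ T ∧ T.Nonempty ∧ T'.Nonempty ∧ H.Connected := by
  have e : {v : Fin (k+2) | v ≠ 0 ∧ v ≠ 1} = Set.range (fun i : Fin k => i.succ.succ) := by
    have h1 : (1 : Fin (k+2)) = Fin.succ 0 := rfl
    ext v
    rw [h1]
    refine Fin.cases ?_ (fun v => ?_) v
    · simp
    · refine Fin.cases ?_ (fun v => ?_) v
      · simp only [Set.mem_setOf_eq, Set.mem_range, ne_eq, Fin.succ_inj, Fin.succ_ne_zero]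
        simp
      · simp only [Set.mem_setOf_eq, Set.mem_range, ne_eq, Fin.succ_inj, Fin.succ_ne_zero]
        simp
  have e2 : (glue T (glue T' H)).comap (fun i : Fin k => i.succ.succ) = H := by
    ext i j; rw [SimpleGraph.comap_adj, glue_succ_succ, glue_succ_succ]
  have e3 : (glue T (glue T' H)).Adj 0 1 ↔ 0 ∈ T := by
    rw [← glue_zero_succ T (glue T' H) 0]; rfl
  rw [e, conn_induce_range _ _ (fun a b h => by simpa using h), e2, e3]
  constructor
  · rintro ⟨h1, h2, h3⟩
    refine ⟨h2, glue_nbr (by omega) _ _ h1, ?_, h3⟩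
    haveI : Nontrivial (Fin (k+2)) := Fin.nontrivial_iff_two_le.2 (by omega)
    obtain ⟨v, hv⟩ := conn_has_nbr _ h1 1
    revert hv
    refine Fin.cases (fun h => (h2 (e3.1 h.symm)).elim) (fun v h => ?_) v
    have h := (glue_succ_succ T (glue T' H) 0 v).1 h
    revert h
    refine Fin.cases (fun h => (h.ne rfl).elim) (fun v h => ?_) v
    exact ⟨v, (glue_zero_succ T' H v).1 h⟩
  · rintro ⟨h1, h2, h3, h4⟩
    exact ⟨glue_connected _ _ (glue_connected _ _ h4 h3) h2, h1, h4⟩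

theorem sum_nonempty_prod {n : ℕ} (a : Fin n → ℝ) :
    ∑ T : Finset (Fin n), (if T.Nonempty then ∏ i ∈ T, a i else 0) = ∏ i, (1 + a i) - 1 := by
  rw [Finset.prod_one_add, Finset.powerset_univ, eq_sub_iff_add_eq,
    ← Finset.sum_erase_add _ _ (mem_univ (∅ : Finset (Fin n))),
    ← Finset.sum_erase_add (a := (∅ : Finset (Fin n))) univ (fun T => ∏ i ∈ T, a i) (mem_univ _)]
  simp only [Finset.not_nonempty_empty, if_false, Finset.prod_empty, add_zero]
  congr 1
  refine Finset.sum_congr rfl fun T hT => ?_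
  rw [if_pos (Finset.nonempty_iff_ne_empty.2 (Finset.ne_of_mem_erase hT))]

theorem graph1 (q : E → E → ℝ) (x : E) {k : ℕ} (hk : 1 ≤ k) (y : Fin k → E) :
    ∑ G ∈ (univ : Finset (SimpleGraph (Fin (k + 1)))).filter
            (fun G => G.Connected ∧ (G.induce {v : Fin (k + 1) | v ≠ 0}).Connected),
      W G (fun i j => q ((Fin.cons x y : Fin (k+1) → E) i) ((Fin.cons x y : Fin (k+1) → E) j))
    = (∏ i, (1 + q x (y i)) - 1) *
      ∑ G ∈ (univ : Finset (SimpleGraph (Fin k))).filter (fun G => G.Connected),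
        W G (fun i j => q (y i) (y j)) := by
  rw [Finset.sum_filter, sum_glue]
  simp only [cond1 hk, W_glue]
  rw [← sum_nonempty_prod, Finset.sum_filter, Finset.sum_mul_sum]
  refine Finset.sum_congr rfl fun T _ => Finset.sum_congr rfl fun H _ => ?_
  by_cases h1 : T.Nonempty <;> by_cases h2 : H.Connected <;> simp [h1, h2]

theorem graph2 (q : E → E → ℝ) (x₁ x₂ : E) {k : ℕ} (hk : 1 ≤ k) (y : Fin k → E) :
    ∑ G ∈ (univ : Finset (SimpleGraph (Fin (k + 2)))).filter
            (fun G => G.Connected ∧ ¬ G.Adj 0 1 ∧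
              (G.induce {v : Fin (k + 2) | v ≠ 0 ∧ v ≠ 1}).Connected),
      W G (fun i j => q ((Fin.cons x₁ (Fin.cons x₂ y) : Fin (k+2) → E) i)
        ((Fin.cons x₁ (Fin.cons x₂ y) : Fin (k+2) → E) j))
    = (∏ i, (1 + q x₁ (y i)) - 1) * ((∏ i, (1 + q x₂ (y i)) - 1) *
      ∑ G ∈ (univ : Finset (SimpleGraph (Fin k))).filter (fun G => G.Connected),
        W G (fun i j => q (y i) (y j))) := by
  rw [Finset.sum_filter, sum_glue, sum_finset_succ]
  simp only [sum_glue (n := k), cond2 hk, W_glue]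
  rw [← sum_nonempty_prod, ← sum_nonempty_prod, Finset.sum_filter, Finset.sum_mul_sum,
    Finset.sum_mul]
  refine Finset.sum_congr rfl fun T _ => ?_
  rw [Finset.mul_sum]
  simp only [Finset.mem_insert_self, not_true, false_and, if_false, Finset.sum_const_zero, zero_add]
  refine Finset.sum_congr rfl fun T' _ => ?_
  rw [Finset.mul_sum]
  refine Finset.sum_congr rfl fun H _ => ?_
  by_cases h1 : T.Nonempty <;> by_cases h2 : H.Connected <;> by_cases h3 : T'.Nonempty <;>
    simp [h1, h2, h3]

theorem prod_pairs_eq (q : E → E → ℝ) (n : ℕ) (x : Fin n → E) :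
    ∏ p ∈ (Finset.univ : Finset (Fin n × Fin n)).filter (fun p => p.1 < p.2), (1 + q (x p.1) (x p.2))
      = ∑ G : SimpleGraph (Fin n), W G (fun i j => q (x i) (x j)) := by
  rw [Finset.prod_filter, Fintype.prod_prod_type]
  induction n with
  | zero => rw [Fintype.sum_unique]; simp [W]
  | succ n ih =>
    rw [← Fin.cons_self_tail x]
    simp only [sum_glue, W_glue, ← Finset.mul_sum]
    rw [← Finset.sum_mul, ← ih (Fin.tail x), ← Finset.powerset_univ, ← Finset.prod_one_add]
    simp only [Fin.prod_univ_succ, Fin.cons_zero, Fin.cons_succ,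
      Fin.succ_pos, Fin.succ_lt_succ_iff, lt_irrefl, if_false, one_mul, if_true,
      Fin.not_lt_zero]

end graphs

end KK

open CF Finset in
open Classical in
/-- eqs. (4.5)–(4.6): graph representation of the kernels `ω_x` and
`ω_{(x₁,x₂)}` for the Kirkwood closure process. -/
theorem kirkwood_kernels_graph_representation (d : ℕ) (hd : 1 ≤ d)
    (ς : ℝ) (hς : 0 < ς) (g h : Euc d → ℝ)
    (hg_even : ∀ z, g (-z) = g z) (hg_nonneg : ∀ z, 0 ≤ g z)
    (hh : ∀ z, h z = g z - 1)
    (ρ ρT : CF (Euc d))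
    (hρ : ∀ (n : ℕ) (x : Fin n → Euc d),
      ρ n x = ς ^ n *
        ∏ p ∈ (Finset.univ : Finset (Fin n × Fin n)).filter (fun p => p.1 < p.2),
          g (x p.1 - x p.2))
    (hρT0 : ρT 0 = 0) (hρTsymm : IsSymm ρT) (hρTexp : starExp ρT = ρ)
    (ωx : Euc d → CF (Euc d))
    (hωx : ∀ x : Euc d, ωx x 0 = 0 ∧ IsSymm (ωx x) ∧ D x ρT = ς • starExp (ωx x))
    (ω : Euc d → Euc d → CF (Euc d))
    (hω : ∀ x₁ x₂ : Euc d, g (x₁ - x₂) ≠ 0 →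
      ω x₁ x₂ 0 = 0 ∧ IsSymm (ω x₁ x₂) ∧
        (ρ 2 ![x₁, x₂])⁻¹ • D2 x₁ x₂ ρT =
          conv (conv (starExp (ω x₁ x₂) - (ς ^ 2 / ρ 2 ![x₁, x₂]) • unit)
              (ς⁻¹ • D x₁ ρT))
            (ς⁻¹ • D x₂ ρT)) :
    -- (i) the one-point kernels
    (∀ (x : Euc d) (k : ℕ), 1 ≤ k → ∀ y : Fin k → Euc d,
      ωx x k y = ς ^ k *
        ∑ G ∈ (Finset.univ : Finset (SimpleGraph (Fin (k + 1)))).filter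
            (fun G => G.Connected ∧
              (G.induce {v : Fin (k + 1) | v ≠ 0}).Connected),
          ∏ p ∈ (Finset.univ : Finset (Fin (k + 1) × Fin (k + 1))).filter
              (fun p => p.1 < p.2 ∧ G.Adj p.1 p.2),
            h ((Fin.cons x y : Fin (k + 1) → Euc d) p.1 - (Fin.cons x y : Fin (k + 1) → Euc d) p.2)) ∧
    -- (ii) the two-point kernels
    (∀ (x₁ x₂ : Euc d), g (x₁ - x₂) ≠ 0 → ∀ (k : ℕ), 1 ≤ k → ∀ y : Fin k → Euc d,
      ω x₁ x₂ k y = ς ^ k *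
        ∑ G ∈ (Finset.univ : Finset (SimpleGraph (Fin (k + 2)))).filter
            (fun G => G.Connected ∧ ¬ G.Adj 0 1 ∧
              (G.induce {v : Fin (k + 2) | v ≠ 0 ∧ v ≠ 1}).Connected),
          ∏ p ∈ (Finset.univ : Finset (Fin (k + 2) × Fin (k + 2))).filter
              (fun p => p.1 < p.2 ∧ G.Adj p.1 p.2),
            h ((Fin.cons x₁ (Fin.cons x₂ y) : Fin (k + 2) → Euc d) p.1 - (Fin.cons x₁ (Fin.cons x₂ y) : Fin (k + 2) → Euc d) p.2)) := by
  set q : Euc d → Euc d → ℝ := fun a b => h (a - b) with hq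
  have hgq : ∀ a b, g (a - b) = 1 + q a b := fun a b => by rw [hq]; simp only [hh]; ring
  let t : KK.CA (Euc d) := ρT
  let r : KK.CA (Euc d) := ρ
  have hr : r = KK.RR ς q := by
    refine KK.ev_ext fun n z => ?_
    rw [KK.ev_RR, ← KK.prod_pairs_eq]
    simp only [← hgq]
    exact hρ n z
  have ht0 : KK.ev0 t = 0 := congrFun hρT0 _
  have htr : KK.ex t = r := hρTexp
  have ht : t = KK.CC ς q :=
    KK.ex_inj _ _ ht0 (KK.ev0_CC ς q) (by rw [htr, KK.ex_CC, hr])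
  let m : Euc d → Euc d → ℝ := fun x u => 1 + q x u
  have hDr : ∀ x, KK.DD x r = ς • KK.Mm (m x) r := by
    intro x; rw [hr]; exact KK.RR_succ ς q x
  have hDt : ∀ x, KK.DD x t = ς • KK.ex (ωx x) := fun x => (hωx x).2.2
  have hw0 : ∀ x, KK.ev0 (ωx x) = 0 := fun x => congrFun (hωx x).1 _
  constructor
  · intro x k hk y
    have h1 := KK.core1 ς hς.ne' r t (ωx x) x (m x) ht0 htr (hw0 x) (hDr x) (hDt x)
    have h2 : ωx x k y = KK.ev (KK.Mm (m x) t - t) k y := by rw [← h1]; rfl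
    rw [h2, KK.ev_sub, KK.ev_Mm, ht, KK.ev_CC]
    have h3 := KK.graph1 q x hk y
    have h4 := fun G : SimpleGraph (Fin (k+1)) => KK.W_filter G (fun i j =>
      q ((Fin.cons x y : Fin (k+1) → Euc d) i) ((Fin.cons x y : Fin (k+1) → Euc d) j))
    simp only [← h4] at h3
    refine Eq.trans ?_ (congrArg (fun a => ς ^ k * a) h3.symm)
    simp only [m]
    ring
  · intro x₁ x₂ hg k hk y
    obtain ⟨a1, -, a2⟩ := hω x₁ x₂ hg
    have hm : m x₂ x₁ = g (x₁ - x₂) := by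
      simp only [m]; rw [← hgq, ← hg_even, neg_sub]
    have hρ2 : ρ 2 ![x₁, x₂] = ς ^ 2 * m x₂ x₁ := by
      rw [hρ, hm, Finset.prod_filter, Fintype.prod_prod_type]
      simp [Fin.prod_univ_succ]
    have hmne : m x₂ x₁ ≠ 0 := by rw [hm]; exact hg
    have hςne : ς ≠ 0 := hς.ne'
    have b1 : ∀ x, (ς⁻¹ • KK.DD x t : KK.CA (Euc d)) = KK.ex (ωx x) := by
      intro x; rw [hDt, smul_smul, inv_mul_cancel₀ hςne, one_smul]
    have b2 : ((ς ^ 2 * m x₂ x₁)⁻¹ • KK.DD x₁ (KK.DD x₂ t) : KK.CA (Euc d)) =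
        (KK.ex (ω x₁ x₂) - (ς ^ 2 / (ς ^ 2 * m x₂ x₁)) • (1 : KK.CA (Euc d))) *
          (ς⁻¹ • KK.DD x₁ t) * (ς⁻¹ • KK.DD x₂ t) := by
      rw [← hρ2]; exact a2
    rw [b1, b1] at b2
    have b3 : KK.DD x₁ (KK.DD x₂ t) = ς ^ 2 • ((m x₂ x₁ • KK.ex (ω x₁ x₂) - 1) *
        KK.ex (ωx x₁) * KK.ex (ωx x₂)) := by
      have hne : ς ^ 2 * m x₂ x₁ ≠ 0 := mul_ne_zero (pow_ne_zero 2 hςne) hmne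
      rw [inv_smul_eq_iff₀ hne] at b2
      have e1 : ς ^ 2 / (ς ^ 2 * m x₂ x₁) = (m x₂ x₁)⁻¹ := by field_simp
      have e2 : (m x₂ x₁ • KK.ex (ω x₁ x₂) - 1 : KK.CA (Euc d)) =
          m x₂ x₁ • (KK.ex (ω x₁ x₂) - (m x₂ x₁)⁻¹ • (1 : KK.CA (Euc d))) := by
        rw [smul_sub, smul_smul, mul_inv_cancel₀ hmne, one_smul]
      rw [b2, e1, e2, smul_mul_assoc, smul_mul_assoc, smul_smul]
    have h1 := KK.core2 ς hςne r t (ωx x₁) (ωx x₂) (ω x₁ x₂) x₁ x₂ (m x₁) (m x₂) hmne ht0 htr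
      (hw0 _) (hw0 _) (congrFun a1 _) (hDr _) (hDr _) (hDt _) (hDt _) b3
    have h2 : ω x₁ x₂ k y = KK.ev (KK.Mm (m x₂) (KK.Mm (m x₁) t) - KK.Mm (m x₁) t
      - KK.Mm (m x₂) t + t) k y := by rw [← h1]; rfl
    rw [h2, KK.ev_add, KK.ev_sub, KK.ev_sub, KK.ev_Mm, KK.ev_Mm, KK.ev_Mm, ht, KK.ev_CC]
    have h3 := KK.graph2 q x₁ x₂ hk y
    have h4 := fun G : SimpleGraph (Fin (k+2)) => KK.W_filter G (fun i j =>
      q ((Fin.cons x₁ (Fin.cons x₂ y) : Fin (k+2) → Euc d) i)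
        ((Fin.cons x₁ (Fin.cons x₂ y) : Fin (k+2) → Euc d) j))
    simp only [← h4] at h3
    refine Eq.trans ?_ (congrArg (fun a => ς ^ k * a) h3.symm)
    simp only [m]
    ring
end
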